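/- For α > -1/2, λ ≥ 0 and n ≥ 3, let x_1 < … < x_n be the zeros of Q_{n,λ}^{(α)} (all real and simple), let N = max_{x∈[x_1,x_n]} |Q_{n,λ}^{(α)}(x)|, and let M_{n,λ} be the smallest real number t > x_n with |Q_{n,λ}^{(α)}(t)| = N. Then for every k with 1 ≤ k ≤ n, the function |d^k/dx^k Q_{n,λ}^{(α)}| attains its maximum over the interval [-M_{n,λ}, M_{n,λ}] at the endpoints; that is, max_{x∈[-M_{n,λ},M_{n,λ}]} |Q_{n,λ}^{(α)(k)}(x)| = |Q_{n,λ}^{(α)(k)}(M_{n,λ})|. -/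

import Mathlib

open Polynomial MeasureTheory Real Set

/-- The Gegenbauer inner product `∫ f g (1-x²)^{α-1/2}` on `(-1,1)`. -/
noncomputable def gegInner (α : ℝ) (f g : Polynomial ℝ) : ℝ :=
  ∫ x in Set.Ioo (-1 : ℝ) 1, f.eval x * g.eval x * (1 - x ^ 2) ^ (α - 1/2)

/-- `C` is the monic Gegenbauer polynomial of degree `n` for parameter `α`. -/
def IsMonicGegenbauer (α : ℝ) (n : ℕ) (C : Polynomial ℝ) : Prop :=
  C.Monic ∧ C.natDegree = n ∧
    ∀ p : Polynomial ℝ, p.degree < (n : ℕ) → gegInner α C p = 0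

/-- The Gegenbauer–Sobolev inner product. -/
noncomputable def sobInner (α lam : ℝ) (f g : Polynomial ℝ) : ℝ :=
  gegInner α f g + lam * gegInner α (derivative f) (derivative g)

/-- `Q` is the monic Gegenbauer–Sobolev polynomial of degree `n`. -/
def IsMonicGegSobolev (α lam : ℝ) (n : ℕ) (Q : Polynomial ℝ) : Prop :=
  Q.Monic ∧ Q.natDegree = n ∧
    ∀ p : Polynomial ℝ, p.degree < (n : ℕ) → sobInner α lam Q p = 0


noncomputable def epol (m : Multiset ℝ) : ℝ[X] :=
  (m.map fun v => Polynomial.C ((1-v)^2) + Polynomial.C (v^2) * X).prod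

noncomputable def ppol (m : Multiset ℝ) : ℝ[X] :=
  (m.map fun v => Polynomial.C (1-v) - Polynomial.C v * X).prod

noncomputable def dval (m : Multiset ℝ) (s : ℝ) : ℝ := (m.map fun v => (1-v)^2 - v^2 * s).prod

lemma epol_zero : epol 0 = 1 := by simp [epol]
lemma ppol_zero : ppol 0 = 1 := by simp [ppol]
lemma dval_zero (s : ℝ) : dval 0 s = 1 := by simp [dval]
lemma epol_cons (v : ℝ) (m : Multiset ℝ) :
    epol (v ::ₘ m) = (Polynomial.C ((1-v)^2) + Polynomial.C (v^2) * X) * epol m := by simp [epol]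
lemma ppol_cons (v : ℝ) (m : Multiset ℝ) :
    ppol (v ::ₘ m) = (Polynomial.C (1-v) - Polynomial.C v * X) * ppol m := by simp [ppol]
lemma dval_cons (v s : ℝ) (m : Multiset ℝ) :
    dval (v ::ₘ m) s = ((1-v)^2 - v^2 * s) * dval m s := by simp [dval]
lemma epol_c0 (v : ℝ) (m : Multiset ℝ) :
    (epol (v ::ₘ m)).coeff 0 = (1-v)^2 * (epol m).coeff 0 := by
  rw [epol_cons, Polynomial.mul_coeff_zero, Polynomial.coeff_add, Polynomial.coeff_C_zero,
    Polynomial.coeff_mul_X_zero, add_zero]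
lemma epol_cs (v : ℝ) (m : Multiset ℝ) (k : ℕ) :
    (epol (v ::ₘ m)).coeff (k+1) = (1-v)^2 * (epol m).coeff (k+1) + v^2 * (epol m).coeff k := by
  rw [epol_cons, add_mul, Polynomial.coeff_add, mul_assoc, Polynomial.coeff_C_mul,
    Polynomial.coeff_C_mul, Polynomial.coeff_X_mul]
lemma ppol_c0 (v : ℝ) (m : Multiset ℝ) :
    (ppol (v ::ₘ m)).coeff 0 = (1-v) * (ppol m).coeff 0 := by
  rw [ppol_cons]; simp [Polynomial.mul_coeff_zero]
lemma ppol_cs (v : ℝ) (m : Multiset ℝ) (k : ℕ) :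
    (ppol (v ::ₘ m)).coeff (k+1) = (1-v) * (ppol m).coeff (k+1) - v * (ppol m).coeff k := by
  rw [ppol_cons, sub_mul, Polynomial.coeff_sub, mul_assoc, Polynomial.coeff_C_mul,
    Polynomial.coeff_C_mul, Polynomial.coeff_X_mul]

lemma epol_nonneg (m : Multiset ℝ) : ∀ k, 0 ≤ (epol m).coeff k := by
  induction m using Multiset.induction with
  | empty => intro k; rw [epol_zero, Polynomial.coeff_one]; split_ifs <;> norm_num
  | cons v m ih =>
    intro k
    cases k with
    | zero => rw [epol_c0]; exact mul_nonneg (sq_nonneg _) (ih 0)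
    | succ k => rw [epol_cs]; exact add_nonneg (mul_nonneg (sq_nonneg _) (ih _)) (mul_nonneg (sq_nonneg _) (ih _))

lemma epol_ppol (m : Multiset ℝ) : (epol m).coeff 0 = (ppol m).coeff 0 ^ 2 ∧
    (epol m).coeff 1 = (ppol m).coeff 1 ^ 2 - 2 * (ppol m).coeff 0 * (ppol m).coeff 2 := by
  induction m using Multiset.induction with
  | empty => rw [epol_zero, ppol_zero]; simp [Polynomial.coeff_one]
  | cons v m ih =>
    obtain ⟨h0, h1⟩ := ih
    have e1 := epol_cs v m 0
    have p1 := ppol_cs v m 0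
    have p2 := ppol_cs v m 1
    norm_num at e1 p1 p2
    rw [epol_c0, ppol_c0, e1, p1, p2, h0, h1]
    constructor <;> ring

lemma dval_bonf (m : Multiset ℝ) (s : ℝ) (hs : 0 ≤ s) (h : ∀ v ∈ m, 0 ≤ (1-v)^2 - v^2 * s) :
    0 ≤ dval m s ∧ dval m s ≤ (epol m).coeff 0 ∧
    (epol m).coeff 0 - (epol m).coeff 1 * s ≤ dval m s ∧
    dval m s ≤ (epol m).coeff 0 - (epol m).coeff 1 * s + (epol m).coeff 2 * s^2 := by
  induction m using Multiset.induction with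
  | empty => rw [epol_zero, dval_zero]; simp [Polynomial.coeff_one]
  | cons v m ih =>
    obtain ⟨h0, h1, h2, h3⟩ := ih (fun w hw => h w (Multiset.mem_cons_of_mem hw))
    have hv := h v (Multiset.mem_cons_self v m)
    have e1 := epol_cs v m 0
    have e2 := epol_cs v m 1
    norm_num at e1 e2
    rw [epol_c0, e1, e2, dval_cons]
    have hA : 0 ≤ (1-v)^2 := sq_nonneg _
    have hB : 0 ≤ v^2 * s := mul_nonneg (sq_nonneg _) hs
    refine ⟨mul_nonneg hv h0, ?_, ?_, ?_⟩
    · nlinarith [mul_nonneg hB h0]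
    · nlinarith [mul_le_mul_of_nonneg_left h2 hA, mul_le_mul_of_nonneg_left h1 hB]
    · nlinarith [mul_le_mul_of_nonneg_left h3 hA, mul_le_mul_of_nonneg_left h2 hB]

lemma epol_plus (m : Multiset ℝ) (q : ℝ) (hq : 0 ≤ q) :
    (epol m).coeff 0 + (epol m).coeff 1 * q + (epol m).coeff 2 * q^2 ≤
      (m.map fun v => (1-v)^2 + v^2 * q).prod := by
  induction m using Multiset.induction with
  | empty => rw [epol_zero]; simp [Polynomial.coeff_one]
  | cons v m ih =>
    have e1 := epol_cs v m 0
    have e2 := epol_cs v m 1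
    norm_num at e1 e2
    rw [epol_c0, e1, e2, Multiset.map_cons, Multiset.prod_cons]
    have hA : 0 ≤ (1-v)^2 := sq_nonneg _
    have hB : 0 ≤ v^2 * q := mul_nonneg (sq_nonneg _) hq
    have := mul_le_mul_of_nonneg_left ih (add_nonneg hA hB)
    have h3 := mul_nonneg (sq_nonneg v) (mul_nonneg (epol_nonneg m 2) (pow_nonneg hq 3))
    nlinarith

/-- Step A. -/
lemma stepA (m : Multiset ℝ) (hv : ∀ v ∈ m, 0 < v)
    (hD : ∀ s, 0 ≤ s → s ≤ 1 → -1 ≤ dval m s)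
    (h0 : (epol m).coeff 0 ≤ 1) (h1 : 4 < (epol m).coeff 1) :
    (epol m).coeff 1 ^ 2 ≤ 4 * (epol m).coeff 2 * (1 + (epol m).coeff 0) := by
  by_contra hcon
  push Not at hcon
  -- choose minimiser
  have hne : m ≠ 0 := by
    rintro rfl
    rw [epol_zero] at h1
    simp [Polynomial.coeff_one] at h1
    linarith
  obtain ⟨v1, hv1, hmin⟩ : ∃ v1 ∈ m, ∀ v ∈ m, (1-v1)^2 * v^2 ≤ (1-v)^2 * v1^2 := by
    obtain ⟨b, hb, hb'⟩ := Finset.exists_min_image m.toFinset (fun v => (1-v)^2/v^2)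
      (by rwa [Multiset.toFinset_nonempty])
    refine ⟨b, by simpa using hb, fun v hvm => ?_⟩
    have := hb' v (by simpa using hvm)
    have p1 := hv v hvm
    have p2 := hv b (by simpa using hb)
    rw [div_le_div_iff₀ (by positivity) (by positivity)] at this
    linarith
  obtain ⟨m1, rfl⟩ := Multiset.exists_cons_of_mem hv1
  have key : ∀ v ∈ m1, v^2 * (epol (v1 ::ₘ m1)).coeff 1 ≤ 2 * (1-v)^2 * (epol (v1 ::ₘ m1)).coeff 2 := by
    intro v hvm
    have hm := hmin v (Multiset.mem_cons_of_mem hvm)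
    obtain ⟨m2, rfl⟩ := Multiset.exists_cons_of_mem hvm
    have e1 := epol_cs v1 (v ::ₘ m2) 0
    have e2 := epol_cs v1 (v ::ₘ m2) 1
    have g1 := epol_cs v m2 0
    have g2 := epol_cs v m2 1
    have g0 := epol_c0 v m2
    norm_num at e1 e2 g1 g2
    rw [e1, e2, g1, g2, g0]
    have f0 := epol_nonneg m2 0
    have f1 := epol_nonneg m2 1
    have f2 := epol_nonneg m2 2
    generalize (epol m2).coeff 0 = F0 at *
    generalize (epol m2).coeff 1 = F1 at *
    generalize (epol m2).coeff 2 = F2 at *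
    have a1 : 0 ≤ (1-v1)^2 := sq_nonneg _
    have b1 : 0 ≤ v1^2 := sq_nonneg _
    have a : 0 ≤ (1-v)^2 := sq_nonneg _
    have b : 0 ≤ v^2 := sq_nonneg _
    generalize (1-v1)^2 = A1 at *
    generalize (v1)^2 = B1 at *
    generalize (1-v)^2 = A at *
    generalize (v)^2 = B at *
    -- B (A1 (A F1 + B F0) + B1 A F0) ≤ 2 A (A1 (A F2 + B F1) + B1 (A F1 + B F0))
    have t1 : A1*B*(B*F0) ≤ A*B1*(B*F0) := mul_le_mul_of_nonneg_right hm (by positivity)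
    have t2 : 0 ≤ A*A1*(A*F2) := by positivity
    have t3 : 0 ≤ A*B1*(A*F1) := by positivity
    have t4 : 0 ≤ A*A1*(B*F1) := by positivity
    nlinarith
  set c0 := (epol (v1 ::ₘ m1)).coeff 0 with hc0
  set c1 := (epol (v1 ::ₘ m1)).coeff 1 with hc1
  set c2 := (epol (v1 ::ₘ m1)).coeff 2 with hc2
  have c0n : 0 ≤ c0 := epol_nonneg _ _
  have c2n : 0 ≤ c2 := epol_nonneg _ _
  -- main bound
  have main : ∀ s, 0 ≤ s → (∀ v ∈ m1, 0 ≤ (1-v)^2 - v^2*s) →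
      dval (v1 ::ₘ m1) s ≤ c0 - c1 * s + c2 * s^2 := by
    intro s hs h
    obtain ⟨b0, b1, b2, b3⟩ := dval_bonf m1 s hs h
    have e1 := epol_cs v1 m1 0
    have e2 := epol_cs v1 m1 1
    norm_num at e1 e2
    rw [hc0, hc1, hc2, epol_c0, e1, e2, dval_cons]
    have d1 := epol_nonneg m1 1
    have d2 := epol_nonneg m1 2
    have a1 : 0 ≤ (1-v1)^2 := sq_nonneg _
    have bb : 0 ≤ v1^2 * s := mul_nonneg (sq_nonneg _) hs
    nlinarith [mul_le_mul_of_nonneg_left b3 a1, mul_le_mul_of_nonneg_left b2 bb]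
  rcases le_total c1 (2*c2) with hc | hc
  · have c2p : 0 < c2 := by linarith
    have := hD (c1/(2*c2)) (by positivity) (by rw [div_le_one (by positivity)]; exact hc)
    have h2 := main (c1/(2*c2)) (by positivity) (by
      intro v hvm
      have := key v hvm
      rw [sub_nonneg, ← mul_div_assoc, div_le_iff₀ (by positivity)]
      linarith)
    have h3 : c0 - c1 * (c1/(2*c2)) + c2 * (c1/(2*c2))^2 = c0 - c1^2/(4*c2) := by field_simp; ring
    have h4 : 1 + c0 < c1^2/(4*c2) := by rw [lt_div_iff₀ (by positivity)]; linarith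
    linarith
  · have := hD 1 (by norm_num) le_rfl
    have h2 := main 1 (by norm_num) (by
      intro v hvm
      have := key v hvm
      have : 2 * (1-v)^2 * c2 ≤ (1-v)^2 * c1 := by nlinarith [sq_nonneg (1-v)]
      have : v^2 * c1 ≤ (1-v)^2 * c1 := by linarith
      have := le_of_mul_le_mul_right this (by linarith)
      linarith)
    linarith

lemma stepA_lower (m : Multiset ℝ) (hv : ∀ v ∈ m, 0 < v)
    (hb : ∀ w, 0 ≤ w → w ≤ 2 → |(m.map fun v => 1 - v * w).prod| ≤ 1)
    (h2 : (ppol m).coeff 2 = 0) (S : ℝ) (hS : 2 ≤ S) (hK : S < |(ppol m).coeff 1|)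
    (η : ℝ) (hη : 0 < η) (hτ : 2 ≤ η * S) :
    1 + (η*S)^2 + (η*S)^4/8 < (m.map fun v => (1-v)^2 + v^2 * η^2).prod := by
  obtain ⟨e0, e1⟩ := epol_ppol m
  rw [h2] at e1
  have hdv : ∀ s, 0 ≤ s → s ≤ 1 → -1 ≤ dval m s := by
    intro s h0 h1
    have hq0 := Real.sqrt_nonneg s
    have hq1 : √s ≤ 1 := by rw [Real.sqrt_le_one]; exact h1
    have a1 := hb (1+√s) (by linarith) (by linarith)
    have a2 := hb (1-√s) (by linarith) (by linarith)
    have : dval m s = (m.map fun v => 1 - v * (1+√s)).prod * (m.map fun v => 1 - v * (1-√s)).prod := by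
      rw [dval, ← Multiset.prod_map_mul]
      congr 1
      apply Multiset.map_congr rfl
      intro v _
      have := Real.sq_sqrt h0
      linear_combination v^2 * this
    have h3 : |dval m s| ≤ 1 := by
      rw [this, abs_mul]
      exact mul_le_one₀ a1 (abs_nonneg _) a2
    exact (abs_le.mp h3).1
  have hp0 : (ppol m).coeff 0 = (m.map fun v => 1 - v * 1).prod := by
    have : ∀ m : Multiset ℝ, (ppol m).coeff 0 = (m.map fun v => 1 - v * 1).prod := by
      intro m
      induction m using Multiset.induction with
      | empty => rw [ppol_zero]; simp
      | cons v m ih => rw [ppol_c0, ih]; simp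
    exact this m
  have h0 : (epol m).coeff 0 ≤ 1 := by
    rw [e0, hp0, sq_le_one_iff_abs_le_one]
    exact hb 1 (by norm_num) (by norm_num)
  have hc1 : (epol m).coeff 1 = |(ppol m).coeff 1|^2 := by rw [sq_abs, e1]; ring
  set K := |(ppol m).coeff 1| with hKd
  have hA := stepA m hv hdv h0 (by rw [hc1]; nlinarith)
  have hpl := epol_plus m (η^2) (by positivity)
  refine lt_of_lt_of_le ?_ hpl
  have c0n := epol_nonneg m 0
  have c2n := epol_nonneg m 2
  rw [hc1] at hA ⊢
  generalize (epol m).coeff 0 = c0 at *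
  generalize (epol m).coeff 2 = c2 at *
  have ht : η*S < η*K := mul_lt_mul_of_pos_left hK hη
  set t := η*K with htd
  set τ := η*S with hτd
  have e3 : K^2*η^2 = t^2 := by rw [htd]; ring
  rw [e3]
  have h5 : t^4 ≤ 4 * (c2 * (η^2)^2) * (1+c0) := by
    have : t^4 = (K^2)^2 * η^4 := by rw [htd]; ring
    rw [this]
    have := mul_le_mul_of_nonneg_right hA (show 0 ≤ η^4 by positivity)
    nlinarith
  have hz : 0 ≤ c2 * (η^2)^2 := by positivity
  generalize c2 * (η^2)^2 = z at *
  have t2 : τ^2 < t^2 := by nlinarith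
  have t4 : τ^4 < t^4 := by
    have : τ^4 = (τ^2)^2 := by ring
    have : t^4 = (t^2)^2 := by ring
    nlinarith [sq_nonneg τ]
  have t16 : 16 < t^4 := by
    have : 4 ≤ τ^2 := by nlinarith
    have : τ^4 = (τ^2)^2 := by ring
    nlinarith
  -- t^4/8 + 1 ≤ c0 + z
  have : 1 + t^4/8 ≤ c0 + z := by
    by_contra hcc
    push Not at hcc
    nlinarith [mul_nonneg (sub_nonneg.2 h0) c0n]
  linarith


lemma bandI_poly (v : ℝ) (hv : 0 ≤ v) : 0 ≤ (287/100)*v^0 + (-32431/20000)*v^1 + (219501/2000000)*v^2 + (19096587/800000000)*v^3 + (1661403069/400000000000)*v^4 + (48180689001/80000000000000)*v^5 := by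
  rcases le_total v (141/50) with h | h
  · have h' : 0 ≤ 141/50 - v := by linarith
    have e : (287/100)*v^0 + (-32431/20000)*v^1 + (219501/2000000)*v^2 + (19096587/800000000)*v^3 + (1661403069/400000000000)*v^4 + (48180689001/80000000000000)*v^5 = (896875000/55730836701)*v^0*(141/50-v)^5 + (6110768125/111461673402)*v^1*(141/50-v)^4 + (56408479381/891693387216)*v^2*(141/50-v)^3 + (441703316566727/17833867744320000)*v^3*(141/50-v)^2 + (26413232956770109/445846693608000000000)*v^4*(141/50-v)^1 + (1885125203742348915701/4458466936080000000000000)*v^5*(141/50-v)^0 := by ring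
    rw [e]; positivity
  · have h' : 0 ≤ v - 141/50 := by linarith
    have e : (287/100)*v^0 + (-32431/20000)*v^1 + (219501/2000000)*v^2 + (19096587/800000000)*v^3 + (1661403069/400000000000)*v^4 + (48180689001/80000000000000)*v^5 = (1885125203742348915701/25000000000000000000000)*(v-141/50)^0 + (12995026509424175161/100000000000000000000)*(v-141/50)^1 + (644940153215806221/1000000000000000000)*(v-141/50)^2 + (2372326283944881/20000000000000000)*(v-141/50)^3 + (10116283287141/800000000000000)*(v-141/50)^4 + (48180689001/80000000000000)*(v-141/50)^5 := by ring
    rw [e]; positivity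

lemma bandI_root (v : ℝ) (hv : 0 < v) : (1-v)^2 + v^2 * 1^2 ≤ Real.exp (87/100 * v) := by
  have h := Real.sum_le_exp_of_nonneg (show 0 ≤ 87/100*v by positivity) 7
  have h2 := bandI_poly v hv.le
  have h3 := mul_nonneg hv.le h2
  simp only [Finset.sum_range_succ, Finset.sum_range_zero, Nat.factorial] at h
  norm_num at h
  refine le_trans ?_ h
  rw [← sub_nonneg]
  refine le_of_le_of_eq h3 ?_
  ring

lemma ftau_deriv (t : ℝ) (ht : 0 < t) : HasDerivAt (fun τ : ℝ => Real.log (1+τ^2+τ^4/8))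
    ((2*t + t^3/2)/(1+t^2+t^4/8)) t := by
  have h1 : HasDerivAt (fun τ : ℝ => 1+τ^2+τ^4/8) (2*t + t^3/2) t := by
    have := (((hasDerivAt_pow 2 t).const_add 1).add ((hasDerivAt_pow 4 t).div_const 8))
    refine this.congr_deriv ?_
    norm_num; ring
  exact h1.log (by positivity)

lemma ftau_concave : ConcaveOn ℝ (Ici 2) (fun τ : ℝ => Real.log (1+τ^2+τ^4/8)) := by
  refine AntitoneOn.concaveOn_of_deriv (convex_Ici 2) ?_ ?_ ?_
  · intro x hx
    have hx : (2:ℝ) ≤ x := hx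
    exact (ftau_deriv x (by linarith)).continuousAt.continuousWithinAt
  · rw [interior_Ici]
    intro x hx
    have hx : (2:ℝ) < x := hx
    exact (ftau_deriv x (by linarith)).differentiableAt.differentiableWithinAt
  · rw [interior_Ici]
    intro a ha b hb hab
    have ha : (2:ℝ) < a := ha
    have hb : (2:ℝ) < b := hb
    rw [(ftau_deriv a (by linarith)).deriv, (ftau_deriv b (by linarith)).deriv,
      div_le_div_iff₀ (by positivity) (by positivity)]
    obtain ⟨p, rfl⟩ : ∃ p, a = 2 + p := ⟨a-2, by ring⟩
    obtain ⟨q, rfl⟩ : ∃ q, b = 2 + p + q := ⟨b-(2+p), by ring⟩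
    have hp : 0 ≤ p := by linarith
    have hq : 0 ≤ q := by linarith
    rw [← sub_nonneg]
    ring_nf
    positivity

lemma ftau_ge (c u τ : ℝ) (h2 : c*2 ≤ Real.log 7) (hu : c*u ≤ Real.log (1+u^2+u^4/8))
    (h2τ : 2 ≤ τ) (hτu : τ ≤ u) : Real.exp (c*τ) ≤ 1+τ^2+τ^4/8 := by
  rw [← Real.le_log_iff_exp_le (by positivity)]
  have hc : ConcaveOn ℝ (Ici 2) (fun τ : ℝ => Real.log (1+τ^2+τ^4/8) - c*τ) := by
    refine ftau_concave.sub ?_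
    exact (LinearMap.convexOn (LinearMap.mulLeft ℝ c) (convex_Ici 2))
  have := hc.min_le_of_mem_Icc (x := 2) (y := u) (z := τ) (by simp) (by simp; linarith) ⟨h2τ, hτu⟩
  have h7 : (0:ℝ) ≤ Real.log (1+2^2+2^4/8) - c*2 := by norm_num; linarith
  have h8 : 0 ≤ min (Real.log (1+2^2+2^4/8) - c*2) (Real.log (1+u^2+u^4/8) - c*u) :=
    le_min h7 (by linarith)
  have := h8.trans this
  linarith

lemma log7_ge : (194/100:ℝ) ≤ Real.log 7 := by
  have h : Real.log 7 = 1/2 * Real.log 49 := by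
    rw [show (49:ℝ) = 7^2 by norm_num, Real.log_pow]; push_cast; ring
  have h2 : Real.log 48 ≤ Real.log 49 := Real.log_le_log (by norm_num) (by norm_num)
  have h3 : Real.log 48 = 4 * Real.log 2 + Real.log 3 := by
    rw [show (48:ℝ) = 2^4*3 by norm_num, Real.log_mul (by norm_num) (by norm_num), Real.log_pow]; push_cast; ring
  have h0 : Real.log 49 = Real.log 48 + Real.log (49/48) := by
    rw [← Real.log_mul (by norm_num) (by norm_num)]; norm_num
  have h5 := Real.one_sub_inv_le_log_of_pos (show (0:ℝ) < 49/48 by norm_num)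
  norm_num at h5
  linarith [Real.log_two_gt_d9, Real.log_three_gt_d9]

lemma tauI (τ : ℝ) (h2τ : 2 ≤ τ) (hτu : τ ≤ 62/10) : Real.exp (87/100*τ) ≤ 1+τ^2+τ^4/8 := by
  refine ftau_ge _ (62/10) τ (by linarith [log7_ge]) ?_ h2τ hτu
  have h2 : Real.log 224 ≤ Real.log (1+(62/10)^2+(62/10)^4/8) := Real.log_le_log (by norm_num) (by norm_num)
  have h3 : Real.log 224 = 5 * Real.log 2 + Real.log 7 := by
    rw [show (224:ℝ) = 2^5*7 by norm_num, Real.log_mul (by norm_num) (by norm_num), Real.log_pow]; push_cast; ring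
  linarith [Real.log_two_gt_d9, log7_ge]

lemma tauII (τ : ℝ) (h2τ : 2 ≤ τ) (hτu : τ ≤ 575/100) : Real.exp (89/100*τ) ≤ 1+τ^2+τ^4/8 := by
  refine ftau_ge _ (575/100) τ (by linarith [log7_ge]) ?_ h2τ hτu
  have h2 : Real.log 168 ≤ Real.log (1+(575/100)^2+(575/100)^4/8) := Real.log_le_log (by norm_num) (by norm_num)
  have h3 : Real.log 168 = 3 * Real.log 2 + Real.log 3 + Real.log 7 := by
    rw [show (168:ℝ) = 2^3*3*7 by norm_num, Real.log_mul (by norm_num) (by norm_num), Real.log_mul (by norm_num) (by norm_num), Real.log_pow]; push_cast; ring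
  linarith [Real.log_two_gt_d9, log7_ge, Real.log_three_gt_d9]

lemma tauIII : Real.exp (96/100*2) ≤ 1+(2:ℝ)^2+2^4/8 := by
  rw [← Real.le_log_iff_exp_le (by positivity)]
  norm_num
  linarith [log7_ge]

lemma prod_le_exp_sum (m : Multiset ℝ) (f : ℝ → ℝ) (c : ℝ) (h0 : ∀ v ∈ m, 0 ≤ f v)
    (h : ∀ v ∈ m, f v ≤ Real.exp (c * v)) : (m.map f).prod ≤ Real.exp (c * m.sum) := by
  induction m using Multiset.induction with
  | empty => simp
  | cons v m ih =>
    rw [Multiset.map_cons, Multiset.prod_cons, Multiset.sum_cons, mul_add, Real.exp_add]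
    refine mul_le_mul (h v (by simp)) (ih (fun w hw => h0 w (by simp [hw])) (fun w hw => h w (by simp [hw]))) ?_ (Real.exp_pos _).le
    apply Multiset.prod_nonneg
    intro a ha
    obtain ⟨w, hw, rfl⟩ := Multiset.mem_map.mp ha
    exact h0 w (by simp [hw])

/-- Band I -/
lemma bandI (m : Multiset ℝ) (hv : ∀ v ∈ m, 0 < v) (h2 : 2 ≤ m.sum) (h6 : m.sum ≤ 62/10) :
    (m.map fun v => (1-v)^2 + v^2 * 1^2).prod ≤ 1 + (1*m.sum)^2 + (1*m.sum)^4/8 := by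
  have := prod_le_exp_sum m (fun v => (1-v)^2 + v^2 * 1^2) (87/100) (fun v _ => by positivity)
    (fun v h => bandI_root v (hv v h))
  refine this.trans ((tauI _ h2 h6).trans ?_)
  rw [one_mul]


lemma pk_circ (f : ℂ → ℝ) (R : ℝ) (hR : 0 < R) (hf : InnerProductSpace.HarmonicOnNhd f (Metric.closedBall 0 R))
    (w : ℂ) (hw : ‖w‖ < R) :
    Real.circleAverage (fun z => (R^2 - ‖w‖^2)/‖z-w‖^2 * f z) 0 R = f w ∧
    CircleIntegrable (fun z => (R^2 - ‖w‖^2)/‖z-w‖^2 * f z) 0 R := by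
  have h := InnerProductSpace.HarmonicOnNhd.circleAverage_poissonKernel_smul (f := f) (c := 0) (R := R) (w := w) hf (by simpa using hw)
  constructor
  · rw [← h]
    apply Real.circleAverage_congr_sphere
    intro z hz
    have hz' : ‖z‖ = R := by simpa [abs_of_pos hR] using hz
    simp [poissonKernel_def, hz']
  · have hc := hf.continuousOn.mono (Metric.sphere_subset_closedBall)
    refine ContinuousOn.circleIntegrable hR.le ?_
    refine ContinuousOn.mul ?_ hc
    refine ContinuousOn.div continuousOn_const (by fun_prop) ?_
    intro z hz h0
    have hz' : ‖z‖ = R := by simpa using hz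
    have : z = w := by simpa [sub_eq_zero] using h0
    rw [this] at hz'
    linarith

lemma harnackR (f : ℂ → ℝ) (R : ℝ) (hR : 0 < R)
    (hf : InnerProductSpace.HarmonicOnNhd f (Metric.closedBall 0 R))
    (hneg : ∀ w, ‖w‖ ≤ R → f w ≤ 0) (k z : ℝ) (hk : 0 < k) (hkR : k < R) (hz : 0 < z) (hzR : z < R)
    (hsym : f (-(k * Complex.I)) = f (k * Complex.I)) :
    f (k * Complex.I) ≤ (R^2-k^2)/(R^2+k^2) * ((R-z)/(R+z) * f z) := by
  have nk : ‖(k:ℂ) * Complex.I‖ = k := by simp [abs_of_pos hk]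
  have nk' : ‖-((k:ℂ) * Complex.I)‖ = k := by simp [abs_of_pos hk]
  have nz : ‖(z:ℂ)‖ = z := by simp [abs_of_pos hz]
  obtain ⟨a1, i1⟩ := pk_circ f R hR hf (k * Complex.I) (by rw [nk]; exact hkR)
  obtain ⟨a2, i2⟩ := pk_circ f R hR hf (-(k * Complex.I)) (by rw [nk']; exact hkR)
  obtain ⟨a3, i3⟩ := pk_circ f R hR hf z (by rw [nz]; exact hzR)
  obtain ⟨a0, i0⟩ := pk_circ f R hR hf 0 (by simpa using hR)
  have b0 : Real.circleAverage f 0 R = f 0 := by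
    apply InnerProductSpace.HarmonicOnNhd.circleAverage_eq
    rwa [abs_of_pos hR]
  have if0 : CircleIntegrable f 0 R :=
    ContinuousOn.circleIntegrable hR.le (hf.continuousOn.mono Metric.sphere_subset_closedBall)
  have ift : ∀ t : ℝ, CircleIntegrable (fun w => t * f w) 0 R := fun t => by
    have := if0.const_smul (a := t)
    simpa [Pi.smul_def] using this
  have bt : ∀ t : ℝ, Real.circleAverage (fun w => t * f w) 0 R = t * f 0 := fun t => by
    rw [← b0]; simpa using (Real.circleAverage_fun_smul (a := t) (f := f) (c := 0) (R := R))
  -- upper bound at z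
  have hzz : (R+z)/(R-z) * f 0 ≤ f z := by
    rw [← a3, ← bt]
    refine Real.circleAverage_mono (ift _) i3 ?_
    intro w hw
    have hw' : ‖w‖ = R := by simpa [abs_of_pos hR] using hw
    refine mul_le_mul_of_nonpos_right ?_ (hneg w hw'.le)
    rw [nz]
    have h1 : R - z ≤ ‖w - z‖ := by
      have := norm_sub_norm_le w z
      rw [nz, hw'] at this; exact this
    have : 0 < R - z := by linarith
    have hpp : 0 < ‖w - z‖ := by linarith
    rw [div_le_div_iff₀ (by positivity) (by linarith)]
    have : (R-z)^2 ≤ ‖w-z‖^2 := by gcongr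
    nlinarith
  have hkk : f (k * Complex.I) ≤ (R^2-k^2)/(R^2+k^2) * f 0 := by
    have : f (k * Complex.I) = 1/2 * f (k * Complex.I) + 1/2 * f (-(k * Complex.I)) := by rw [hsym]; ring
    rw [this, ← a1, ← a2, ← bt, ← smul_eq_mul, ← smul_eq_mul (1/2:ℝ) (circleAverage _ _ _), ← Real.circleAverage_smul, ← Real.circleAverage_smul,
      ← Real.circleAverage_add i1.const_smul i2.const_smul]
    refine Real.circleAverage_mono (i1.const_smul.add i2.const_smul) (ift _) ?_
    intro w hw
    have hw' : ‖w‖ = R := by simpa [abs_of_pos hR] using hw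
    simp only [Pi.add_apply, Pi.smul_apply, smul_eq_mul]
    rw [nk, nk']
    have e : ‖w - k*Complex.I‖^2 + ‖w - -(k*Complex.I)‖^2 = 2*(R^2+k^2) := by
      have := parallelogram_law_with_norm ℝ w (k*Complex.I)
      rw [hw', nk] at this
      rw [sub_neg_eq_add]
      nlinarith
    have p1 : 0 < ‖w - k*Complex.I‖ := by
      have := norm_sub_norm_le w (k*Complex.I)
      rw [nk, hw'] at this; linarith
    have p2 : 0 < ‖w - -(k*Complex.I)‖ := by
      have := norm_sub_norm_le w (-(k*Complex.I))
      rw [nk', hw'] at this; linarith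
    have hfw := hneg w hw'.le
    have : (R^2-k^2)/(R^2+k^2) ≤ 1/2 * ((R^2-k^2)/‖w - k*Complex.I‖^2) + 1/2 * ((R^2-k^2)/‖w - -(k*Complex.I)‖^2) := by
      have q1 : 0 < ‖w - k*Complex.I‖^2 := by positivity
      have q2 : 0 < ‖w - -(k*Complex.I)‖^2 := by positivity
      generalize ‖w - k*Complex.I‖^2 = A at *
      generalize ‖w - -(k*Complex.I)‖^2 = B at *
      have hD : 0 < R^2-k^2 := by nlinarith
      have e2 : R^2+k^2 = (A+B)/2 := by linarith
      rw [e2]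
      have : 1/2 * ((R^2-k^2)/A) + 1/2*((R^2-k^2)/B) - (R^2-k^2)/((A+B)/2) = (R^2-k^2)*(A-B)^2/(2*A*B*(A+B)) := by
        field_simp; ring
      have h2 : 0 ≤ (R^2-k^2)*(A-B)^2/(2*A*B*(A+B)) := by positivity
      linarith
    have := mul_le_mul_of_nonpos_right this hfw
    linarith
  have h4 : f 0 ≤ (R-z)/(R+z) * f z := by
    have p : 0 < R - z := by linarith
    have p' : 0 < R + z := by linarith
    have h5 := mul_le_mul_of_nonneg_left hzz (show 0 ≤ (R-z)/(R+z) by positivity)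
    have : (R-z)/(R+z) * ((R+z)/(R-z) * f 0) = f 0 := by field_simp
    linarith
  have : 0 ≤ (R^2-k^2)/(R^2+k^2) := div_nonneg (by nlinarith) (by positivity)
  exact hkk.trans (mul_le_mul_of_nonneg_left h4 this)

lemma harnack (U : ℂ → ℂ) (hU : Differentiable ℂ U) (hne : ∀ w, ‖w‖ < 1 → U w ≠ 0)
    (hle : ∀ w, ‖w‖ = 1 → ‖U w‖ ≤ 1) (k z : ℝ) (hk : 0 < k) (hk1 : k < 1) (hz : 0 < z) (hz1 : z < 1)
    (hsym : ‖U (-(k * Complex.I))‖ = ‖U (k * Complex.I)‖) :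
    Real.log ‖U (k * Complex.I)‖ ≤ (1-k^2)/(1+k^2) * ((1-z)/(1+z)) * Real.log ‖U z‖ := by
  have hle' : ∀ w, ‖w‖ ≤ 1 → ‖U w‖ ≤ 1 := by
    intro w hw
    refine Complex.norm_le_of_forall_mem_frontier_norm_le (U := Metric.ball 0 1) Metric.isBounded_ball
      hU.diffContOnCl ?_ ?_
    · intro y hy
      rw [frontier_ball _ (by norm_num)] at hy
      exact hle y (by simpa using hy)
    · rw [closure_ball _ (by norm_num)]; simpa using hw
  have key : ∀ R ∈ Ioo (max k z) 1, Real.log ‖U (k * Complex.I)‖ ≤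
      (R^2-k^2)/(R^2+k^2) * ((R-z)/(R+z) * Real.log ‖U z‖) := by
    intro R hR
    have h1 : k < R := lt_of_le_of_lt (le_max_left _ _) hR.1
    have h2 : z < R := lt_of_le_of_lt (le_max_right _ _) hR.1
    refine harnackR (fun w => Real.log ‖U w‖) R (by linarith) ?_ ?_ k z hk h1 hz h2 (by simp only [hsym])
    · intro w hw
      refine AnalyticAt.harmonicAt_log_norm (hU.analyticAt w) (hne w ?_)
      have : ‖w‖ ≤ R := by simpa using hw
      linarith [hR.2]
    · intro w hw
      exact Real.log_nonpos (norm_nonneg _) (hle' w (by linarith [hR.2]))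
  have ht : Filter.Tendsto (fun R : ℝ => (R^2-k^2)/(R^2+k^2) * ((R-z)/(R+z) * Real.log ‖U z‖))
      (nhdsWithin 1 (Iio 1)) (nhds ((1^2-k^2)/(1^2+k^2) * ((1-z)/(1+z) * Real.log ‖U z‖))) := by
    refine Filter.Tendsto.mono_left ?_ nhdsWithin_le_nhds
    refine ContinuousAt.tendsto (x := (1:ℝ)) (f := fun R : ℝ => (R^2-k^2)/(R^2+k^2) * ((R-z)/(R+z) * Real.log ‖U z‖)) ?_
    have c1 : ContinuousAt (fun R : ℝ => (R^2-k^2)/(R^2+k^2)) 1 :=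
      ContinuousAt.div (by fun_prop) (by fun_prop) (by positivity)
    have c2 : ContinuousAt (fun R : ℝ => (R-z)/(R+z)) 1 :=
      ContinuousAt.div (by fun_prop) (by fun_prop) (by positivity)
    exact c1.mul (c2.mul continuousAt_const)
  have := ge_of_tendsto ht (by
    filter_upwards [Ioo_mem_nhdsLT (show max k z < 1 from max_lt hk1 hz1)] with R hR using key R hR)
  rw [one_pow, ← mul_assoc] at this
  exact this


lemma root_exists (t : ℝ) (ht : 1 < t) : ∃ X : ℝ, 0 < X ∧ X < 1 ∧ X^2 + 1 = 2*t*X := by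
  have h0 : 0 < t^2-1 := by nlinarith
  have hs := Real.sq_sqrt h0.le
  have hp := Real.sqrt_pos.2 h0
  refine ⟨t - √(t^2-1), ?_, ?_, ?_⟩
  · nlinarith
  · nlinarith
  · nlinarith

lemma slit_ne (A B : ℝ) (hA : 0 < A) (hB : |B| ≤ 2*A) (w : ℂ) (hw : ‖w‖ < 1) :
    (A:ℂ) - B * w + A * w^2 ≠ 0 := by
  intro h
  have h1 := congrArg Complex.re h
  have h2 := congrArg Complex.im h
  simp [pow_two] at h1 h2
  have hn : w.re^2 + w.im^2 < 1 := by
    have : ‖w‖^2 < 1 := by nlinarith [norm_nonneg w]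
    rw [← Complex.normSq_eq_norm_sq, Complex.normSq_apply] at this
    nlinarith
  set x := w.re
  set y := w.im
  obtain ⟨hB1, hB2⟩ := abs_le.mp hB
  have h3 : y * (2*A*x - B) = 0 := by linarith
  rcases mul_eq_zero.mp h3 with h4 | h4
  · rw [h4] at h1 hn
    -- A - B x + A x^2 = 0
    have hx1 : x < 1 := by nlinarith
    have hx2 : -1 < x := by nlinarith
    rcases le_total 0 x with hx | hx
    · nlinarith [mul_le_mul_of_nonneg_right hB2 hx, mul_pos hA (show 0 < (1-x)^2 by nlinarith)]
    · nlinarith [mul_le_mul_of_nonpos_right hB1 hx, mul_pos hA (show 0 < (1+x)^2 by nlinarith)]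
  · have hB' : B = 2*A*x := by linarith
    rw [hB'] at h1
    have : A * (1 - (x^2+y^2)) = 0 := by nlinarith
    have : 0 < A * (1 - (x^2+y^2)) := mul_pos hA (by linarith)
    linarith

/-- the local factor statement -/
def Good (z a k η θ c v : ℝ) (G : ℂ → ℂ) : Prop :=
  Differentiable ℂ G ∧ (∀ w, ‖w‖ < 1 → G w ≠ 0) ∧
  (∀ w : ℂ, ‖w‖ = 1 → ‖G w‖ = |1 - v * (1 - a * w.re)|) ∧
  ‖G (-(k * Complex.I))‖ = ‖G (k * Complex.I)‖ ∧
  Real.log ((1-v)^2 + v^2*η^2) ≤ 2*(c*η*v) + 2 * Real.log ‖G (k * Complex.I)‖ - 2*θ * Real.log ‖G z‖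

lemma good_slit (z a k η θ c v : ℝ) (hz : 0 < z) (hz1 : z < 1) (hk : 0 < k) (hk1 : k < 1) (hv : 0 < v)
    (ha : a = 2*z/(1+z^2)) (hη : η = a*(1-k^2)/(2*k)) (hc : 0 < c)
    (hs : |v - 1| ≤ v*a) (hin : -Real.log k + θ * Real.log z ≤ c*η/(1+a)) :
    ∃ G, Good z a k η θ c v G := by
  have ha0 : 0 < a := by rw [ha]; positivity
  have hη0 : 0 < η := by rw [hη]; apply div_pos (mul_pos ha0 (by nlinarith)) (by positivity)
  have hrot : ∀ s : ℝ, s^2 = 1 → ‖((v*a/2:ℝ):ℂ) - ((v-1:ℝ):ℂ) * (s*k*Complex.I) + ((v*a/2:ℝ):ℂ) * (s*k*Complex.I)^2‖^2 =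
      k^2 * ((1-v)^2 + v^2*η^2) := by
    intro s hs
    rw [← Complex.normSq_eq_norm_sq, Complex.normSq_apply]
    have hs' : (s:ℂ)^2 = 1 := by exact_mod_cast hs
    have e : ((v*a/2:ℝ):ℂ) - ((v-1:ℝ):ℂ) * (s*k*Complex.I) + ((v*a/2:ℝ):ℂ) * (s*k*Complex.I)^2 =
      ((v*a/2*(1-k^2):ℝ):ℂ) + ((-(v-1)*s*k:ℝ):ℂ) * Complex.I := by
      push_cast
      linear_combination ((v:ℂ)*a/2) * s^2*k^2 * Complex.I_sq - ((v:ℂ)*a/2) * k^2 * hs'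
    rw [e]
    simp only [Complex.add_re, Complex.ofReal_re, Complex.re_ofReal_mul, Complex.I_re, Complex.add_im, Complex.ofReal_im, Complex.im_ofReal_mul, Complex.I_im]
    rw [hη]
    field_simp
    linear_combination (4*k^2*(v-1)^2) * hs
  have hpos : 0 < (1-v)^2 + v^2*η^2 := by positivity
  refine ⟨fun w => ((v*a/2:ℝ):ℂ) - ((v-1:ℝ):ℂ) * w + ((v*a/2:ℝ):ℂ) * w^2, by fun_prop, ?_, ?_, ?_, ?_⟩
  · intro w hw
    exact slit_ne _ _ (by positivity) (by rw [show 2*(v*a/2) = v*a by ring]; exact hs) w hw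
  · intro w hw
    have hn : w.re^2 + w.im^2 = 1 := by
      have : ‖w‖^2 = 1 := by rw [hw]; norm_num
      rw [← Complex.normSq_eq_norm_sq, Complex.normSq_apply] at this
      nlinarith
    have e : ((v*a/2:ℝ):ℂ) - ((v-1:ℝ):ℂ) * w + ((v*a/2:ℝ):ℂ) * w^2 = w * ((1 - v*(1-a*w.re) : ℝ) : ℂ) := by
      apply Complex.ext
      · simp [pow_two]
        linear_combination (-(v*a/2)) * hn
      · simp [pow_two]
        ring
    simp only [e, norm_mul, hw, one_mul, Complex.norm_real, Real.norm_eq_abs]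
  · have h1 := hrot 1 (by norm_num)
    have h2 := hrot (-1) (by norm_num)
    simp only [Complex.ofReal_one, Complex.ofReal_neg, one_mul, neg_mul] at h1 h2
    have := h2.trans h1.symm
    exact (sq_eq_sq₀ (norm_nonneg _) (norm_nonneg _)).mp this
  · have h1 := hrot 1 (by norm_num)
    simp only [Complex.ofReal_one, one_mul] at h1
    have ez : ((v*a/2:ℝ):ℂ) - ((v-1:ℝ):ℂ) * (z:ℂ) + ((v*a/2:ℝ):ℂ) * (z:ℂ)^2 = ((z:ℝ):ℂ) := by
      rw [ha]
      have : (1 + (z:ℂ)^2) ≠ 0 := by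
        have : (1+z^2:ℝ) ≠ 0 := by positivity
        exact_mod_cast this
      push_cast
      field_simp
      ring
    simp only [ez, Complex.norm_real, Real.norm_eq_abs, abs_of_pos hz]
    set g := ‖((v*a/2:ℝ):ℂ) - ((v-1:ℝ):ℂ) * (k*Complex.I) + ((v*a/2:ℝ):ℂ) * (k*Complex.I)^2‖ with hg
    have hl : 2 * Real.log g = 2 * Real.log k + Real.log ((1-v)^2 + v^2*η^2) := by
      have : Real.log (g^2) = Real.log (k^2 * ((1-v)^2 + v^2*η^2)) := by rw [h1]
      rw [Real.log_pow, Real.log_mul (by positivity) hpos.ne', Real.log_pow] at this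
      exact_mod_cast this
    have hv1 : 1/(1+a) ≤ v := by
      rw [div_le_iff₀ (by positivity)]
      have := (abs_le.mp hs).1
      linarith
    have : c*η/(1+a) ≤ c*η*v := by
      rw [show c*η/(1+a) = c*η*(1/(1+a)) by ring]
      exact mul_le_mul_of_nonneg_left hv1 (by positivity)
    linarith

lemma good_out (z a k η θ c v X : ℝ) (hz : 0 < z) (hz1 : z < 1) (hk : 0 < k) (hk1 : k < 1) (hv : 0 < v)
    (ha : a = 2*z/(1+z^2)) (hη : η = a*(1-k^2)/(2*k))
    (hX0 : X ≠ 0) (hX1 : |X| < 1) (hXz : X ≠ z)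
    (hXv : v * ((X-z)*(1-X*z)) = (1+z^2)*X)
    (hin : 1/2*Real.log ((k^2+X^2)/(k^2*(1+k^2*X^2))) + θ * Real.log (z*(1-X*z)/|X-z|) ≤ c*η*v) :
    ∃ G, Good z a k η θ c v G := by
  obtain ⟨hXa, hXb⟩ := abs_lt.mp hX1
  have hXz1 : 0 < 1 - X*z := by nlinarith
  have hXz0 : 0 < |X - z| := abs_pos.2 (sub_ne_zero.2 hXz)
  set g := z/(|X-z| *(1-X*z)) with hg
  have hg0 : 0 < g := by positivity
  have hgv : g * |X| = v*a/2 := by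
    have h1 : v * (|X-z| *(1-X*z)) = (1+z^2)*|X| := by
      have := congrArg abs hXv
      rw [abs_mul, abs_mul, abs_mul, abs_of_pos hv, abs_of_pos hXz1, abs_of_pos (show 0 < 1+z^2 by positivity)] at this
      exact this
    have aux : ∀ D Y A : ℝ, 0 < D → 0 < Y → v * (D * Y) = (1+z^2)*A →
        z/(D*Y)*A = v*(2*z/(1+z^2))/2 := by
      intro D Y A hD hY h
      field_simp
      linarith
    rw [hg, ha]
    exact aux _ _ _ hXz0 hXz1 h1
  have hrot : ∀ s : ℝ, s^2 = 1 → ‖(g:ℂ) * (1 - X*(s*k*Complex.I))^2‖ = g*(1+k^2*X^2) := by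
    intro s hs
    rw [norm_mul, norm_pow, ← Complex.normSq_eq_norm_sq, Complex.normSq_apply]
    simp only [Complex.norm_real, Real.norm_eq_abs, abs_of_pos hg0]
    simp
    left
    linear_combination (k^2*X^2) * hs
  have hη0 : η ≠ 0 := by
    have : 0 < a := by rw [ha]; positivity
    have : 0 < η := by rw [hη]; apply div_pos (mul_pos this (by nlinarith)) (by positivity)
    exact this.ne'
  refine ⟨fun w => (g:ℂ) * (1 - X*w)^2, by fun_prop, ?_, ?_, ?_, ?_⟩
  · intro w hw
    have hlt : ‖(X:ℂ) * w‖ < 1 := by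
      rw [norm_mul, Complex.norm_real, Real.norm_eq_abs]
      nlinarith [norm_nonneg w, abs_nonneg X]
    have h2 : (1:ℂ) - X*w ≠ 0 := by
      intro h
      have : (X:ℂ)*w = 1 := (sub_eq_zero.mp h).symm
      rw [this] at hlt
      simp at hlt
    have h3 : (g:ℂ) ≠ 0 := by exact_mod_cast hg0.ne'
    exact mul_ne_zero h3 (pow_ne_zero _ h2)
  · intro w hw
    have hn : w.re^2 + w.im^2 = 1 := by
      have : ‖w‖^2 = 1 := by rw [hw]; norm_num
      rw [← Complex.normSq_eq_norm_sq, Complex.normSq_apply] at this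
      nlinarith
    rw [norm_mul, norm_pow, ← Complex.normSq_eq_norm_sq, Complex.normSq_apply]
    simp only [Complex.norm_real, Real.norm_eq_abs, abs_of_pos hg0]
    simp
    have e1 : (1 - X*w.re)*(1-X*w.re) + X*w.im*(X*w.im) = 1 + X^2 - 2*X*w.re := by
      linear_combination X^2 * hn
    rw [e1]
    have hpos : 0 ≤ 1 + X^2 - 2*X*w.re := by rw [← e1]; nlinarith
    have e2 : X * (1 - v*(1-a*w.re)) = -(v*a/2) * (1+X^2-2*X*w.re) := by
      rw [ha]
      field_simp
      linear_combination (-1:ℝ) * hXv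
    have e3 := congrArg abs e2
    rw [abs_mul, abs_mul, abs_of_nonneg hpos, abs_neg, ← hgv, abs_of_nonneg (show 0 ≤ g*|X| by positivity)] at e3
    have hXp : 0 < |X| := abs_pos.2 hX0
    have : |X| * |1 - v*(1-a*w.re)| = |X| * (g * (1+X^2-2*X*w.re)) := by rw [e3]; ring
    exact (mul_left_cancel₀ hXp.ne' this).symm
  · have h1 := hrot 1 (by norm_num)
    have h2 := hrot (-1) (by norm_num)
    simp only [Complex.ofReal_one, Complex.ofReal_neg, one_mul, neg_mul] at h1 h2
    exact h2.trans h1.symm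
  · have h1 := hrot 1 (by norm_num)
    simp only [Complex.ofReal_one, one_mul] at h1
    have ez : ‖(g:ℂ) * (1 - X*(z:ℂ))^2‖ = z*(1-X*z)/|X-z| := by
      have : (g:ℂ) * (1 - X*(z:ℂ))^2 = ((g*(1-X*z)^2 : ℝ) : ℂ) := by push_cast; ring
      rw [this, Complex.norm_real, Real.norm_eq_abs, abs_of_pos (by positivity), hg]
      field_simp
    simp only [ez, h1]
    have e : (1-v)^2+v^2*η^2 = (g*(1+k^2*X^2))^2 * ((k^2+X^2)/(k^2*(1+k^2*X^2))) := by
      have hg2 : g^2*X^2 = v^2*a^2/4 := by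
        rw [← sq_abs X]; have : (g * |X|)^2 = (v*a/2)^2 := by rw [hgv]
        linear_combination this
      have hX2 : X^2 ≠ 0 := pow_ne_zero _ hX0
      have e5 : X*(1-v) = -(v*a/2)*(1+X^2) := by
        rw [ha]; field_simp; linear_combination (-1:ℝ)*hXv
      have e6 : X^2*(1-v)^2 = (v^2*a^2/4)*(1+X^2)^2 := by
        have : (X*(1-v))^2 = (-(v*a/2)*(1+X^2))^2 := by rw [e5]
        linear_combination this
      apply mul_left_cancel₀ hX2
      have hk2 : 1 + k^2*X^2 ≠ 0 := by positivity
      have : X^2 * ((g*(1+k^2*X^2))^2 * ((k^2+X^2)/(k^2*(1+k^2*X^2)))) = (g^2*X^2)*((1+k^2*X^2)*(k^2+X^2)/k^2) := by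
        field_simp
      rw [this, hg2, mul_add, e6, hη]
      field_simp
      ring
    rw [e, Real.log_mul (by positivity) (by positivity), Real.log_pow]
    push_cast
    linarith

lemma good_all (z a k η θ c : ℝ) (hz : 0 < z) (hz1 : z < 1) (hk : 0 < k) (hk1 : k < 1) (hc : 0 < c)
    (ha : a = 2*z/(1+z^2)) (hη : η = a*(1-k^2)/(2*k))
    (hneg : ∀ s, 0 < s → s ≤ 1 → 1/2*Real.log ((k^2+s^2)/(k^2*(1+k^2*s^2))) + θ * Real.log (z*(1+s*z)/(s+z)) ≤
      c*η*((1+z^2)*s/((s+z)*(1+s*z))))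
    (hposi : ∀ X, z < X → X < 1 → 1/2*Real.log ((k^2+X^2)/(k^2*(1+k^2*X^2))) + θ * Real.log (z*(1-X*z)/(X-z)) ≤
      c*η*((1+z^2)*X/((X-z)*(1-X*z))))
    (v : ℝ) (hv : 0 < v) : ∃ G, Good z a k η θ c v G := by
  have ha0 : 0 < a := by rw [ha]; positivity
  by_cases hs : |v-1| ≤ v*a
  · refine good_slit z a k η θ c v hz hz1 hk hk1 hv ha hη hc hs ?_
    have := hneg 1 one_pos le_rfl
    have e1 : (k^2+1^2)/(k^2*(1+k^2*1^2)) = (k^2)⁻¹ := by field_simp; ring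
    have e2 : z*(1+1*z)/(1+z) = z := by field_simp
    have e3 : c*η*((1+z^2)*1/((1+z)*(1+1*z))) = c*η/(1+a) := by
      rw [ha]; field_simp; ring
    rw [e1, e2, e3, Real.log_inv, Real.log_pow] at this
    push_cast at this
    linarith
  · push Not at hs
    rcases lt_abs.mp hs with h | h
    · obtain ⟨X, X0, X1, hX⟩ := root_exists ((v-1)/(v*a)) (by rw [lt_div_iff₀ (by positivity)]; linarith)
      have hXv : v * ((X-z)*(1-X*z)) = (1+z^2)*X := by
        rw [ha] at hX
        field_simp at hX
        linear_combination (-1:ℝ)*hX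
      have hXz1 : 0 < 1 - X*z := by nlinarith
      have hXz : z < X := by
        have h1 : 0 < v * ((X-z)*(1-X*z)) := by rw [hXv]; positivity
        have h2 := (pos_iff_pos_of_mul_pos h1).mp hv
        have h3 := (pos_iff_pos_of_mul_pos h2).mpr hXz1
        linarith
      have p : 0 < X - z := by linarith
      refine good_out z a k η θ c v X hz hz1 hk hk1 hv ha hη X0.ne' (by rw [abs_of_pos X0]; exact X1) hXz.ne' hXv ?_
      rw [abs_of_pos p]
      refine (hposi X hXz X1).trans (le_of_eq ?_)
      congr 1
      rw [div_eq_iff (by positivity)]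
      exact hXv.symm
    · obtain ⟨s, X0, X1, hX⟩ := root_exists (-(v-1)/(v*a)) (by rw [lt_div_iff₀ (by positivity)]; linarith)
      have hXv : v * ((-s-z)*(1-(-s)*z)) = (1+z^2)*(-s) := by
        rw [ha] at hX
        field_simp at hX
        linear_combination (-1:ℝ)*hX
      refine good_out z a k η θ c v (-s) hz hz1 hk hk1 hv ha hη (by linarith [X0] |> fun (h : -s < 0) => h.ne) (by rw [abs_neg, abs_of_pos X0]; exact X1) (by linarith) hXv ?_
      have e1 : |-s - z| = s+z := by rw [show -s - z = -(s+z) by ring, abs_neg, abs_of_pos (by positivity)]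
      rw [e1, neg_sq, show 1 - -s*z = 1+s*z by ring]
      refine (hneg s X0 X1.le).trans (le_of_eq ?_)
      congr 1
      rw [div_eq_iff (by positivity)]
      linarith

lemma slit_band (z a k η θ c : ℝ) (hz : 0 < z) (hz1 : z < 1) (hk : 0 < k) (hk1 : k < 1)
    (ha : a = 2*z/(1+z^2)) (hη : η = a*(1-k^2)/(2*k)) (hθ : θ = (1-k^2)/(1+k^2) * ((1-z)/(1+z)))
    (m : Multiset ℝ) (hv : ∀ v ∈ m, 0 < v)
    (hb : ∀ w, 0 ≤ w → w ≤ 2 → |(m.map fun v => 1 - v * w).prod| ≤ 1)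
    (hgood : ∀ v, 0 < v → ∃ G, Good z a k η θ c v G) :
    (m.map fun v => (1-v)^2 + v^2*η^2).prod ≤ Real.exp (2*c*(η*m.sum)) := by
  classical
  have ha0 : 0 < a := by rw [ha]; positivity
  have ha1 : a ≤ 1 := by rw [ha, div_le_one (by positivity)]; nlinarith [sq_nonneg (1-z)]
  have hη0 : 0 < η := by
    rw [hη]; apply div_pos (mul_pos ha0 (by nlinarith)) (by positivity)
  have key : ∀ m : Multiset ℝ, (∀ v ∈ m, 0 < v) → ∃ U : ℂ → ℂ, Differentiable ℂ U ∧ (∀ w, ‖w‖ < 1 → U w ≠ 0) ∧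
    (∀ w : ℂ, ‖w‖ = 1 → ‖U w‖ = |(m.map fun v => 1 - v * (1 - a * w.re)).prod|) ∧
    ‖U (-(k * Complex.I))‖ = ‖U (k * Complex.I)‖ ∧
    0 < (m.map fun v => (1-v)^2 + v^2*η^2).prod ∧
    Real.log ((m.map fun v => (1-v)^2 + v^2*η^2).prod) ≤ 2*(c*η*m.sum) + 2 * Real.log ‖U (k * Complex.I)‖ - 2*θ * Real.log ‖U z‖ := by
    intro m
    induction m using Multiset.induction with
    | empty =>
      intro _
      exact ⟨fun _ => 1, by fun_prop, by simp, by simp, by simp, by simp, by simp⟩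
    | cons v m ih =>
      intro h
      obtain ⟨U, u1, u2, u3, u4, u5, u6⟩ := ih (fun w hw => h w (Multiset.mem_cons_of_mem hw))
      have hv0 : 0 < v := h v (Multiset.mem_cons_self v m)
      obtain ⟨G, g1, g2, g3, g4, g5⟩ := hgood v hv0
      have hvp : 0 < (1-v)^2+v^2*η^2 := by positivity
      refine ⟨fun w => G w * U w, g1.mul u1, fun w hw => mul_ne_zero (g2 w hw) (u2 w hw), ?_, ?_, ?_, ?_⟩
      · intro w hw
        rw [norm_mul, g3 w hw, u3 w hw, Multiset.map_cons, Multiset.prod_cons, abs_mul]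
      · simp only [norm_mul, g4, u4]
      · rw [Multiset.map_cons, Multiset.prod_cons]; positivity
      · rw [Multiset.map_cons, Multiset.prod_cons, Multiset.sum_cons, Real.log_mul hvp.ne' u5.ne']
        have nk : ‖(k:ℂ) * Complex.I‖ < 1 := by simp [abs_of_pos hk, hk1]
        have nz : ‖(z:ℂ)‖ < 1 := by simp [abs_of_pos hz, hz1]
        simp only [norm_mul (G _)]
        rw [Real.log_mul (norm_ne_zero_iff.2 (g2 _ nk)) (norm_ne_zero_iff.2 (u2 _ nk)),
          Real.log_mul (norm_ne_zero_iff.2 (g2 _ nz)) (norm_ne_zero_iff.2 (u2 _ nz))]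
        linarith
  obtain ⟨U, u1, u2, u3, u4, u5, u6⟩ := key m hv
  have := harnack U u1 u2 (by
    intro w hw
    rw [u3 w hw]
    have : |w.re| ≤ 1 := by rw [← hw]; exact Complex.abs_re_le_norm w
    obtain ⟨h1, h2⟩ := abs_le.mp this
    exact hb _ (by nlinarith) (by nlinarith)) k z hk hk1 hz hz1 u4
  rw [← hθ] at this
  rw [← Real.log_le_iff_le_exp u5]
  linarith


lemma tang (w w0 L : ℝ) (hw : 0 < w) (h0 : 0 < w0) (hL : Real.log w0 ≤ L) :
    Real.log w ≤ w/w0 - 1 + L := by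
  have h := Real.log_le_sub_one_of_pos (show 0 < w/w0 by positivity)
  rw [Real.log_div hw.ne' h0.ne'] at h
  linarith

lemma combine3 (Pk P1 P2 s z R θ y0 ly lam : ℝ) (hPk : 0 < Pk) (h1 : 0 < P1) (h2 : 0 < P2)
    (hz : 0 < z) (hθ : 0 < θ) (hy0 : 0 < y0) (hly : Real.log y0 ≤ ly)
    (hN : 0 ≤ R*s*Pk - 2*lam*s^2*P1*P2 - θ*(z*P2/y0 + (ly-1)*P1)*Pk*P2) :
    2*lam*s^2/Pk + θ*Real.log (z*P2/P1) ≤ R*(s/(P1*P2)) := by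
  have t := mul_le_mul_of_nonneg_left (tang (z*P2/P1) y0 ly (by positivity) hy0 hly) hθ.le
  have e : R*(s/(P1*P2)) - 2*lam*s^2/Pk - θ*(z*P2/P1/y0 - 1 + ly) =
    (R*s*Pk - 2*lam*s^2*P1*P2 - θ*(z*P2/y0 + (ly-1)*P1)*Pk*P2)/(P1*P2*Pk) := by
    field_simp; ring
  have := div_nonneg hN (show 0 ≤ P1*P2*Pk by positivity)
  linarith

lemma combine2 (Pk PH P1 P2 s z R θ w0 y0 lw ly : ℝ) (hPk : 0 < Pk) (hPH : 0 < PH) (h1 : 0 < P1) (h2 : 0 < P2)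
    (hz : 0 < z) (hθ : 0 < θ) (hw0 : 0 < w0) (hy0 : 0 < y0) (hlw : Real.log w0 ≤ lw) (hly : Real.log y0 ≤ ly)
    (hN : 0 ≤ R*s*Pk - 1/2*(PH/w0 + (lw-1)*Pk)*P1*P2 - θ*(z*P2/y0 + (ly-1)*P1)*Pk*P2) :
    1/2*Real.log (PH/Pk) + θ*Real.log (z*P2/P1) ≤ R*(s/(P1*P2)) := by
  have t := mul_le_mul_of_nonneg_left (tang (z*P2/P1) y0 ly (by positivity) hy0 hly) hθ.le
  have t2 := tang (PH/Pk) w0 lw (by positivity) hw0 hlw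
  have e : R*(s/(P1*P2)) - 1/2*(PH/Pk/w0 - 1 + lw) - θ*(z*P2/P1/y0 - 1 + ly) =
    (R*s*Pk - 1/2*(PH/w0 + (lw-1)*Pk)*P1*P2 - θ*(z*P2/y0 + (ly-1)*P1)*Pk*P2)/(P1*P2*Pk) := by
    field_simp; ring
  have := div_nonneg hN (show 0 ≤ P1*P2*Pk by positivity)
  linarith

lemma lg_4_1 : Real.log (4) ≤ (1733/1250) := by
  have h : Real.log (4) = 2*Real.log 2 := by
    rw [show (4:ℝ) = 2^2 by norm_num, Real.log_pow]; push_cast; ring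
  rw [h]
  linarith [Real.log_two_gt_d9, Real.log_two_lt_d9, Real.log_three_gt_d9, Real.log_three_lt_d9, Real.log_five_gt_d9, Real.log_five_lt_d9]

lemma lg_1_5 : Real.log (1/5) ≤ (-16093/10000) := by
  have h : Real.log (1/5) = -Real.log 5 := by
    rw [one_div, Real.log_inv]
  rw [h]
  linarith [Real.log_two_gt_d9, Real.log_two_lt_d9, Real.log_three_gt_d9, Real.log_three_lt_d9, Real.log_five_gt_d9, Real.log_five_lt_d9]

lemma lg_4_3 : Real.log (4/3) ≤ (1439/5000) := by
  have h : Real.log (4/3) = 2*Real.log 2 - Real.log 3 := by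
    rw [Real.log_div (by norm_num) (by norm_num), show (4:ℝ) = 2^2 by norm_num, Real.log_pow]; push_cast; ring
  rw [h]
  linarith [Real.log_two_gt_d9, Real.log_two_lt_d9, Real.log_three_gt_d9, Real.log_three_lt_d9, Real.log_five_gt_d9, Real.log_five_lt_d9]

lemma lg_8_3 : Real.log (8/3) ≤ (9809/10000) := by
  have h : Real.log (8/3) = 3*Real.log 2-Real.log 3 := by
    rw [Real.log_div (by norm_num) (by norm_num), show (8:ℝ) = 2^3 by norm_num, Real.log_pow]; push_cast; ring
  rw [h]
  linarith [Real.log_two_gt_d9, Real.log_two_lt_d9, Real.log_three_gt_d9, Real.log_three_lt_d9, Real.log_five_gt_d9, Real.log_five_lt_d9]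

lemma lg_2_1 : Real.log (2) ≤ (1733/2500) := by
  have h : Real.log (2) = Real.log 2 := by
    norm_num
  rw [h]
  linarith [Real.log_two_gt_d9, Real.log_two_lt_d9, Real.log_three_gt_d9, Real.log_three_lt_d9, Real.log_five_gt_d9, Real.log_five_lt_d9]

lemma lg_9_8 : Real.log (9/8) ≤ (1179/10000) := by
  have h : Real.log (9/8) = 2*Real.log 3-3*Real.log 2 := by
    rw [Real.log_div (by norm_num) (by norm_num), show (8:ℝ) = 2^3 by norm_num, show (9:ℝ) = 3^2 by norm_num, Real.log_pow, Real.log_pow]; push_cast; ring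
  rw [h]
  linarith [Real.log_two_gt_d9, Real.log_two_lt_d9, Real.log_three_gt_d9, Real.log_three_lt_d9, Real.log_five_gt_d9, Real.log_five_lt_d9]

lemma lg_5_2 : Real.log (5/2) ≤ (2291/2500) := by
  have h : Real.log (5/2) = Real.log 5-Real.log 2 := by
    rw [Real.log_div (by norm_num) (by norm_num)]
  rw [h]
  linarith [Real.log_two_gt_d9, Real.log_two_lt_d9, Real.log_three_gt_d9, Real.log_three_lt_d9, Real.log_five_gt_d9, Real.log_five_lt_d9]

lemma lg_1_4 : Real.log (1/4) ≤ (-6931/5000) := by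
  have h : Real.log (1/4) = -2*Real.log 2 := by
    rw [one_div, Real.log_inv, show (4:ℝ) = 2^2 by norm_num, Real.log_pow]; push_cast; ring
  rw [h]
  linarith [Real.log_two_gt_d9, Real.log_two_lt_d9, Real.log_three_gt_d9, Real.log_three_lt_d9, Real.log_five_gt_d9, Real.log_five_lt_d9]

lemma lg_3_1 : Real.log (3) ≤ (10987/10000) := by
  have h : Real.log (3) = Real.log 3 := by
    norm_num
  rw [h]
  linarith [Real.log_two_gt_d9, Real.log_two_lt_d9, Real.log_three_gt_d9, Real.log_three_lt_d9, Real.log_five_gt_d9, Real.log_five_lt_d9]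

lemma lg_1 : Real.log (1) ≤ (0) := by simp

lemma b2n_0 (s : ℝ) (h0 : 0 < s) (hl : (0) ≤ s) (hu : s ≤ (41/100)) :
    1/2*Real.log ((1+(121/25)*s^2)/(1+(25/121)*s^2)) + (32/73)*Real.log ((1/5)*(1+s*(1/5))/(s+(1/5))) ≤ (1068/6875)*(s/((s+(1/5))*(1+s*(1/5)))) := by
  refine combine2 (1+(25/121)*s^2) (1+(121/25)*s^2) (s+(1/5)) (1+s*(1/5)) s (1/5) (1068/6875) (32/73) (1) (1) (0) (0)
    (by positivity) (by positivity) (by positivity) (by positivity) (by norm_num) (by norm_num) (by norm_num) (by norm_num) lg_1 lg_1 ?_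
  have hl' : 0 ≤ s - (0) := by linarith
  have hu' : 0 ≤ (41/100) - s := by linarith
  refine le_of_le_of_eq (b := (0)*(s-(0))^0*((41/100)-s)^4 + (462662400/55343563)*(s-(0))^1*((41/100)-s)^3 + (13894667520/608779193)*(s-(0))^2*((41/100)-s)^2 + (2508205551024/167414278075)*(s-(0))^3*((41/100)-s)^1 + (60337140816/837071390375)*(s-(0))^4*((41/100)-s)^0) (by positivity) (by ring)

lemma b2n_1 (s : ℝ) (h0 : 0 < s) (hl : (41/100) ≤ s) (hu : s ≤ (1)) :
    1/2*Real.log ((1+(121/25)*s^2)/(1+(25/121)*s^2)) + (32/73)*Real.log ((1/5)*(1+s*(1/5))/(s+(1/5))) ≤ (1068/6875)*(s/((s+(1/5))*(1+s*(1/5)))) := by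
  refine combine2 (1+(25/121)*s^2) (1+(121/25)*s^2) (s+(1/5)) (1+s*(1/5)) s (1/5) (1068/6875) (32/73) (4) (1/5) (1733/1250) (-16093/10000)
    (by positivity) (by positivity) (by positivity) (by positivity) (by norm_num) (by norm_num) (by norm_num) (by norm_num) lg_4_1 lg_1_5 ?_
  have hl' : 0 ≤ s - (41/100) := by linarith
  have hu' : 0 ≤ (1) - s := by linarith
  refine le_of_le_of_eq (b := (334889055883907/1177359146843000)*(s-(41/100))^0*((1)-s)^4 + (10581103063491/2675816242825)*(s-(41/100))^1*((1)-s)^3 + (9798045256580/1177359146843)*(s-(41/100))^2*((1)-s)^2 + (5833077260160/1177359146843)*(s-(41/100))^3*((1)-s)^1 + (3497952000/16128207491)*(s-(41/100))^4*((1)-s)^0) (by positivity) (by ring)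

lemma b2n (s : ℝ) (h0 : 0 < s) (hs1 : s ≤ 1) :
    1/2*Real.log ((1+(121/25)*s^2)/(1+(25/121)*s^2)) + (32/73)*Real.log ((1/5)*(1+s*(1/5))/(s+(1/5))) ≤ (1068/6875)*(s/((s+(1/5))*(1+s*(1/5)))) := by
  rcases le_total s (41/100) with h | h
  · exact b2n_0 s h0 (by linarith) h
  · exact b2n_1 s h0 h (by linarith)

lemma b2p_0 (s : ℝ) (h0 : (1/5) < s) (hl : (1/5) ≤ s) (hu : s ≤ (8/25)) :
    1/2*Real.log ((1+(121/25)*s^2)/(1+(25/121)*s^2)) + (32/73)*Real.log ((1/5)*(1-s*(1/5))/(s-(1/5))) ≤ (1068/6875)*(s/((s-(1/5))*(1-s*(1/5)))) := by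
  refine combine2 (1+(25/121)*s^2) (1+(121/25)*s^2) (s-(1/5)) (1-s*(1/5)) s (1/5) (1068/6875) (32/73) (4/3) (8/3) (1439/5000) (9809/10000)
    (by positivity) (by positivity) (by linarith) (by linarith) (by norm_num) (by norm_num) (by norm_num) (by norm_num) lg_4_3 lg_8_3 ?_
  have hl' : 0 ≤ s - (1/5) := by linarith
  have hu' : 0 ≤ (8/25) - s := by linarith
  refine le_of_le_of_eq (b := (9821000/2623401)*(s-(1/5))^0*((8/25)-s)^4 + (179732063/2623401)*(s-(1/5))^1*((8/25)-s)^3 + (4850682347/34978680)*(s-(1/5))^2*((8/25)-s)^2 + (38995548733/524680200)*(s-(1/5))^3*((8/25)-s)^1 + (3999403501/5246802000)*(s-(1/5))^4*((8/25)-s)^0) (by positivity) (by ring)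

lemma b2p_1 (s : ℝ) (h0 : (1/5) < s) (hl : (8/25) ≤ s) (hu : s ≤ (59/100)) :
    1/2*Real.log ((1+(121/25)*s^2)/(1+(25/121)*s^2)) + (32/73)*Real.log ((1/5)*(1-s*(1/5))/(s-(1/5))) ≤ (1068/6875)*(s/((s-(1/5))*(1-s*(1/5)))) := by
  refine combine2 (1+(25/121)*s^2) (1+(121/25)*s^2) (s-(1/5)) (1-s*(1/5)) s (1/5) (1068/6875) (32/73) (2) (9/8) (1733/2500) (1179/10000)
    (by positivity) (by positivity) (by linarith) (by linarith) (by norm_num) (by norm_num) (by norm_num) (by norm_num) lg_2_1 lg_9_8 ?_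
  have hl' : 0 ≤ s - (8/25) := by linarith
  have hu' : 0 ≤ (59/100) - s := by linarith
  refine le_of_le_of_eq (b := (401310238816/2151516745125)*(s-(8/25))^0*((59/100)-s)^4 + (2818821312848/195592431375)*(s-(8/25))^1*((59/100)-s)^3 + (22505046707828/717172248375)*(s-(8/25))^2*((59/100)-s)^2 + (37052732757487/2151516745125)*(s-(8/25))^3*((59/100)-s)^1 + (4916660621723/17212133961000)*(s-(8/25))^4*((59/100)-s)^0) (by positivity) (by ring)

lemma b2p_2 (s : ℝ) (h0 : (1/5) < s) (hl : (59/100) ≤ s) (hu : s ≤ (1)) :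
    1/2*Real.log ((1+(121/25)*s^2)/(1+(25/121)*s^2)) + (32/73)*Real.log ((1/5)*(1-s*(1/5))/(s-(1/5))) ≤ (1068/6875)*(s/((s-(1/5))*(1-s*(1/5)))) := by
  refine combine2 (1+(25/121)*s^2) (1+(121/25)*s^2) (s-(1/5)) (1-s*(1/5)) s (1/5) (1068/6875) (32/73) (5/2) (1/4) (2291/2500) (-6931/5000)
    (by positivity) (by positivity) (by linarith) (by linarith) (by norm_num) (by norm_num) (by norm_num) (by norm_num) lg_5_2 lg_1_4 ?_
  have hl' : 0 ≤ s - (59/100) := by linarith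
  have hu' : 0 ≤ (1) - s := by linarith
  refine le_of_le_of_eq (b := (1079005679085009/1372797080215000)*(s-(59/100))^0*((1)-s)^4 + (4609598383059/470135986375)*(s-(59/100))^1*((1)-s)^3 + (25159355475668/1372797080215)*(s-(59/100))^2*((1)-s)^2 + (2604546375168/274559416043)*(s-(59/100))^3*((1)-s)^1 + (1217766400/3761087891)*(s-(59/100))^4*((1)-s)^0) (by positivity) (by ring)

lemma b2p (s : ℝ) (h0 : (1/5) < s) (hs1 : s ≤ 1) :
    1/2*Real.log ((1+(121/25)*s^2)/(1+(25/121)*s^2)) + (32/73)*Real.log ((1/5)*(1-s*(1/5))/(s-(1/5))) ≤ (1068/6875)*(s/((s-(1/5))*(1-s*(1/5)))) := by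
  rcases le_total s (8/25) with h | h
  · exact b2p_0 s h0 (by linarith) h
  · rcases le_total s (59/100) with h' | h'
    · exact b2p_1 s h0 h h'
    · exact b2p_2 s h0 h' (by linarith)

lemma b3n_0 (s : ℝ) (h0 : 0 < s) (hl : (0) ≤ s) (hu : s ≤ (3/5)) :
    2*(27/25)*s^2/(1+s^2) + (7/11)*Real.log ((2/9)*(1+s*(2/9))/(s+(2/9))) ≤ (16/75)*(s/((s+(2/9))*(1+s*(2/9)))) := by
  refine combine3 (1+s^2) (s+(2/9)) (1+s*(2/9)) s (2/9) (16/75) (7/11) (1) (0) (27/25)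
    (by positivity) (by positivity) (by positivity) (by norm_num) (by norm_num) (by norm_num) lg_1 ?_
  have hl' : 0 ≤ s - (0) := by linarith
  have hu' : 0 ≤ (3/5) - s := by linarith
  refine le_of_le_of_eq (b := (0)*(s-(0))^0*((3/5)-s)^4 + (8285/2187)*(s-(0))^1*((3/5)-s)^3 + (68267/6561)*(s-(0))^2*((3/5)-s)^2 + (230654/32805)*(s-(0))^3*((3/5)-s)^1 + (11288/164025)*(s-(0))^4*((3/5)-s)^0) (by positivity) (by ring)

lemma b3n_1 (s : ℝ) (h0 : 0 < s) (hl : (3/5) ≤ s) (hu : s ≤ (1)) :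
    2*(27/25)*s^2/(1+s^2) + (7/11)*Real.log ((2/9)*(1+s*(2/9))/(s+(2/9))) ≤ (16/75)*(s/((s+(2/9))*(1+s*(2/9)))) := by
  refine combine3 (1+s^2) (s+(2/9)) (1+s*(2/9)) s (2/9) (16/75) (7/11) (1/5) (-16093/10000) (27/25)
    (by positivity) (by positivity) (by positivity) (by norm_num) (by norm_num) (by norm_num) lg_1_5 ?_
  have hl' : 0 ≤ s - (3/5) := by linarith
  have hu' : 0 ≤ (1) - s := by linarith
  refine le_of_le_of_eq (b := (887285029/71280000)*(s-(3/5))^0*((1)-s)^4 + (71965933/1336500)*(s-(3/5))^1*((1)-s)^3 + (240007799/3207600)*(s-(3/5))^2*((1)-s)^2 + (1034099/29160)*(s-(3/5))^3*((1)-s)^1 + (176449/93312)*(s-(3/5))^4*((1)-s)^0) (by positivity) (by ring)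

lemma b3n (s : ℝ) (h0 : 0 < s) (hs1 : s ≤ 1) :
    2*(27/25)*s^2/(1+s^2) + (7/11)*Real.log ((2/9)*(1+s*(2/9))/(s+(2/9))) ≤ (16/75)*(s/((s+(2/9))*(1+s*(2/9)))) := by
  rcases le_total s (3/5) with h | h
  · exact b3n_0 s h0 (by linarith) h
  · exact b3n_1 s h0 h (by linarith)

lemma b3p_0 (s : ℝ) (h0 : (2/9) < s) (hl : (2/9) ≤ s) (hu : s ≤ (69/200)) :
    2*(27/25)*s^2/(1+s^2) + (7/11)*Real.log ((2/9)*(1-s*(2/9))/(s-(2/9))) ≤ (16/75)*(s/((s-(2/9))*(1-s*(2/9)))) := by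
  refine combine3 (1+s^2) (s-(2/9)) (1-s*(2/9)) s (2/9) (16/75) (7/11) (3) (10987/10000) (27/25)
    (by positivity) (by linarith) (by linarith) (by norm_num) (by norm_num) (by norm_num) lg_3_1 ?_
  have hl' : 0 ≤ s - (2/9) := by linarith
  have hu' : 0 ≤ (69/200) - s := by linarith
  refine le_of_le_of_eq (b := (6816640000000/306880262091)*(s-(2/9))^0*((69/200)-s)^4 + (1518663332000/11365935633)*(s-(2/9))^1*((69/200)-s)^3 + (8953820630408/41675097321)*(s-(2/9))^2*((69/200)-s)^2 + (8039464141123/77176106150)*(s-(2/9))^3*((69/200)-s)^1 + (9387851568993/7717610615000)*(s-(2/9))^4*((69/200)-s)^0) (by positivity) (by ring)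

lemma b3p_1 (s : ℝ) (h0 : (2/9) < s) (hl : (69/200) ≤ s) (hu : s ≤ (69/100)) :
    2*(27/25)*s^2/(1+s^2) + (7/11)*Real.log ((2/9)*(1-s*(2/9))/(s-(2/9))) ≤ (16/75)*(s/((s-(2/9))*(1-s*(2/9)))) := by
  refine combine3 (1+s^2) (s-(2/9)) (1-s*(2/9)) s (2/9) (16/75) (7/11) (9/8) (1179/10000) (27/25)
    (by positivity) (by linarith) (by linarith) (by norm_num) (by norm_num) (by norm_num) lg_9_8 ?_
  have hl' : 0 ≤ s - (69/200) := by linarith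
  have hu' : 0 ≤ (69/100) - s := by linarith
  refine le_of_le_of_eq (b := (288898663285753/908838216495000)*(s-(69/200))^0*((69/100)-s)^4 + (109214403612653/8415168671250)*(s-(69/200))^1*((69/100)-s)^3 + (3147228354997634/113604777061875)*(s-(69/200))^2*((69/100)-s)^2 + (190062687820418/12622753006875)*(s-(69/200))^3*((69/100)-s)^1 + (41271824372006/113604777061875)*(s-(69/200))^4*((69/100)-s)^0) (by positivity) (by ring)

lemma b3p_2 (s : ℝ) (h0 : (2/9) < s) (hl : (69/100) ≤ s) (hu : s ≤ (1)) :
    2*(27/25)*s^2/(1+s^2) + (7/11)*Real.log ((2/9)*(1-s*(2/9))/(s-(2/9))) ≤ (16/75)*(s/((s-(2/9))*(1-s*(2/9)))) := by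
  refine combine3 (1+s^2) (s-(2/9)) (1-s*(2/9)) s (2/9) (16/75) (7/11) (1/5) (-16093/10000) (27/25)
    (by positivity) (by linarith) (by linarith) (by norm_num) (by norm_num) (by norm_num) lg_1_5 ?_
  have hl' : 0 ≤ s - (69/100) := by linarith
  have hu' : 0 ≤ (1) - s := by linarith
  refine le_of_le_of_eq (b := (14498032542211/4114286055000)*(s-(69/100))^0*((1)-s)^4 + (11723609494901/246857163300)*(s-(69/100))^1*((1)-s)^3 + (838775666189/7405714899)*(s-(69/100))^2*((1)-s)^2 + (731910151600/7405714899)*(s-(69/100))^3*((1)-s)^1 + (219309820000/7405714899)*(s-(69/100))^4*((1)-s)^0) (by positivity) (by ring)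

lemma b3p (s : ℝ) (h0 : (2/9) < s) (hs1 : s ≤ 1) :
    2*(27/25)*s^2/(1+s^2) + (7/11)*Real.log ((2/9)*(1-s*(2/9))/(s-(2/9))) ≤ (16/75)*(s/((s-(2/9))*(1-s*(2/9)))) := by
  rcases le_total s (69/200) with h | h
  · exact b3p_0 s h0 (by linarith) h
  · rcases le_total s (69/100) with h' | h'
    · exact b3p_1 s h0 h h'
    · exact b3p_2 s h0 h' (by linarith)

lemma bandII (m : Multiset ℝ) (hv : ∀ v ∈ m, 0 < v)
    (hb : ∀ w, 0 ≤ w → w ≤ 2 → |(m.map fun v => 1 - v * w).prod| ≤ 1)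
    (h1 : 61/10 ≤ m.sum) (h2 : m.sum ≤ 17) :
    (m.map fun v => (1-v)^2 + v^2 * (48/143)^2).prod ≤ 1 + (48/143*m.sum)^2 + (48/143*m.sum)^4/8 := by
  have hg := good_all (1/5) (5/13) (5/11) (48/143) (32/73) (445/1000) (by norm_num) (by norm_num) (by norm_num)
    (by norm_num) (by norm_num) (by norm_num) (by norm_num) (by
      intro s h0 hs1
      have := b2n s h0 hs1
      have e1 : (((5:ℝ)/11)^2+s^2)/((5/11)^2*(1+(5/11)^2*s^2)) = (1+(121/25)*s^2)/(1+(25/121)*s^2) := by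
        rw [div_eq_div_iff (by positivity) (by positivity)]; ring
      rw [e1]
      refine this.trans (le_of_eq ?_)
      ring) (by
      intro s h0 hs1
      have := b2p s h0 hs1.le
      have e1 : (((5:ℝ)/11)^2+s^2)/((5/11)^2*(1+(5/11)^2*s^2)) = (1+(121/25)*s^2)/(1+(25/121)*s^2) := by
        rw [div_eq_div_iff (by positivity) (by positivity)]; ring
      rw [e1]
      refine this.trans (le_of_eq ?_)
      ring)
  have := slit_band (1/5) (5/13) (5/11) (48/143) (32/73) (445/1000) (by norm_num) (by norm_num) (by norm_num)
    (by norm_num) (by norm_num) (by norm_num) (by norm_num) m hv hb hg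
  refine this.trans ?_
  rw [show (2*(445/1000):ℝ) = 89/100 by norm_num]
  exact tauII _ (by linarith) (by linarith)

lemma first_term (k X : ℝ) (hk : 0 < k) (hk1 : k < 1) (hX : 0 < X) (hX1 : X ≤ 1) :
    1/2*Real.log ((k^2+X^2)/(k^2*(1+k^2*X^2))) ≤
      (1-k^2)/(1+k^2) * (2*((1+k^2)^2/(4*k^2))*X^2/(1+X^2)) := by
  set W := (k^2+X^2)/(k^2*(1+k^2*X^2)) with hW
  have hk2 : k^2 < 1 := by nlinarith
  have hX2 : X^2 ≤ 1 := by nlinarith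
  have hW0 : 0 < W := by positivity
  have hW1 : 1 ≤ W := by
    rw [hW, one_le_div (by positivity)]
    nlinarith [mul_nonneg (sq_nonneg X) (show 0 ≤ 1-k^2*k^2 by nlinarith [sq_nonneg k])]
  have hl : Real.log W ≤ (W - W⁻¹)/2 := by
    have := Real.self_le_sinh_iff.2 (Real.log_nonneg hW1)
    rwa [Real.sinh_eq, Real.exp_neg, Real.exp_log hW0] at this
  have e : (1-k^2)/(1+k^2) * (2*((1+k^2)^2/(4*k^2))*X^2/(1+X^2)) - 1/2*((W - W⁻¹)/2) =
     (1-k^2)*(1+k^2)*X^2*((X^2*(1-X^2))*(1-k^2)^2)/(4*k^2*(1+X^2)*(1+k^2*X^2)*(k^2+X^2)) := by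
    rw [hW]; field_simp; ring
  have h3 : 0 ≤ 1-k^2 := by linarith
  have h4 : 0 ≤ 1-X^2 := by linarith
  have : 0 ≤ (1-k^2)*(1+k^2)*X^2*((X^2*(1-X^2))*(1-k^2)^2)/(4*k^2*(1+X^2)*(1+k^2*X^2)*(k^2+X^2)) := by
    positivity
  linarith

lemma bandIII (m : Multiset ℝ) (hv : ∀ v ∈ m, 0 < v)
    (hb : ∀ w, 0 ≤ w → w ≤ 2 → |(m.map fun v => 1 - v * w).prod| ≤ 1)
    (h1 : 17 ≤ m.sum) :
    (m.map fun v => (1-v)^2 + v^2 * (2/m.sum)^2).prod ≤ 1 + (2/m.sum*m.sum)^2 + (2/m.sum*m.sum)^4/8 := by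
  set S := m.sum with hS
  have hS0 : 0 < S := by linarith
  set η := 2/S with hη
  have hη0 : 0 < η := by positivity
  have hη1 : η ≤ 2/17 := by rw [hη]; gcongr
  set h := η*(85/36) with hh
  have hh0 : 0 < h := by positivity
  have hh1 : h ≤ 5/18 := by rw [hh]; linarith
  set q := √(1+h^2) with hq
  have hq2 : q^2 = 1+h^2 := Real.sq_sqrt (by positivity)
  have hq0 : 0 < q := Real.sqrt_pos.2 (by positivity)
  set k := q - h with hk
  have hk0 : 0 < k := by nlinarith
  have hk1 : k < 1 := by nlinarith
  have hkk : 1 - k^2 = 2*h*k := by rw [hk]; nlinarith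
  have hlam : (1+k^2)^2/(4*k^2) ≤ 27/25 := by
    rw [div_le_iff₀ (by positivity)]
    have : (1+k^2)^2 = 4*k^2*(1+h^2) := by
      have : (1+k^2)^2 = (1-k^2)^2 + 4*k^2 := by ring
      rw [this, hkk]; ring
    rw [this]
    nlinarith [mul_nonneg (sq_nonneg k) (show 0 ≤ 8/100 - h^2 by nlinarith)]
  set T := (1-k^2)/(1+k^2) with hT
  have hT0 : 0 < T := by rw [hT, hkk]; positivity
  have hTη : T * (36/85) ≤ η := by
    have : T ≤ h := by
      rw [hT, hkk, div_le_iff₀ (by positivity)]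
      nlinarith [sq_nonneg (1-k)]
    rw [hh] at this; linarith
  have fin : ∀ (s E L Y : ℝ), 0 < s → s ≤ 1 → 0 ≤ E → L = Real.log ((k^2+s^2)/(k^2*(1+k^2*s^2))) →
      2*(27/25)*s^2/(1+s^2) + (7/11)*Y ≤ (16/75)*E →
      1/2*L + T*(7/11)*Y ≤ (48/100)*η*((1+(2/9)^2)*E) := by
    intro s E L Y hs hs1 hE hL hY
    have f := first_term k s hk0 hk1 hs hs1
    rw [← hL, ← hT] at f
    have f2 : 2*((1+k^2)^2/(4*k^2))*s^2/(1+s^2) ≤ 2*(27/25)*s^2/(1+s^2) := by gcongr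
    have f3 := mul_le_mul_of_nonneg_left f2 hT0.le
    have f4 := mul_le_mul_of_nonneg_left hY hT0.le
    have f5 := mul_le_mul_of_nonneg_right hTη hE
    nlinarith
  have ha : (36/85:ℝ) = 2*(2/9)/(1+(2/9)^2) := by norm_num
  have hη' : η = 36/85*(1-k^2)/(2*k) := by rw [hkk, hh]; field_simp
  have hθ : T*(7/11) = (1-k^2)/(1+k^2)*((1-2/9)/(1+2/9)) := by rw [hT]; norm_num
  have hg := good_all (2/9) (36/85) k η (T*(7/11)) (48/100) (by norm_num) (by norm_num) hk0 hk1
    (by norm_num) ha hη' (by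
      intro s h0 hs1
      have := fin s (s/((s+2/9)*(1+s*(2/9)))) _ _ h0 hs1 (by positivity) rfl (b3n s h0 hs1)
      refine this.trans (le_of_eq ?_)
      rw [mul_div_assoc]) (by
      intro s h0 hs1
      have p1 : 0 < s - 2/9 := by linarith
      have p2 : 0 < 1 - s*(2/9) := by linarith
      have p3 : 0 < s := by linarith
      have := fin s (s/((s-2/9)*(1-s*(2/9)))) _ _ p3 hs1.le (by positivity) rfl (b3p s h0 hs1.le)
      refine this.trans (le_of_eq ?_)
      rw [mul_div_assoc])
  have := slit_band (2/9) (36/85) k η (T*(7/11)) (48/100) (by norm_num) (by norm_num) hk0 hk1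
    ha hη' hθ m hv hb hg
  refine this.trans ?_
  rw [← hS, show η*S = 2 by rw [hη]; field_simp, show (2*(48/100):ℝ) = 96/100 by norm_num]
  exact tauIII


lemma small_case (m : Multiset ℝ) (hv : ∀ v ∈ m, 0 < v ∧ v ≤ 2) :
    |(ppol m).coeff 0| ≤ 1 ∧ |(ppol m).coeff 1| ≤ m.sum := by
  induction m using Multiset.induction with
  | empty => rw [ppol_zero]; simp [Polynomial.coeff_one]
  | cons v m ih =>
    obtain ⟨h0, h1⟩ := ih (fun w hw => hv w (Multiset.mem_cons_of_mem hw))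
    obtain ⟨p, q⟩ := hv v (Multiset.mem_cons_self v m)
    have e := ppol_cs v m 0
    norm_num at e
    have ha : |1-v| ≤ 1 := abs_le.2 ⟨by linarith, by linarith⟩
    rw [ppol_c0, e, Multiset.sum_cons]
    constructor
    · rw [abs_mul]; exact mul_le_one₀ ha (abs_nonneg _) h0
    · refine (abs_sub _ _).trans ?_
      rw [abs_mul, abs_mul, abs_of_pos p]
      nlinarith [abs_nonneg ((ppol m).coeff 1)]

lemma C0 (m : Multiset ℝ) (hv : ∀ v ∈ m, 0 < v)
    (hb : ∀ w, 0 ≤ w → w ≤ 2 → |(m.map fun v => 1 - v * w).prod| ≤ 1)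
    (h2 : (ppol m).coeff 2 = 0) : |(ppol m).coeff 1| ≤ m.sum := by
  by_contra hK
  push Not at hK
  by_cases hS : m.sum ≤ 2
  · have := (small_case m (fun v h => ⟨hv v h, (Multiset.single_le_sum (fun x hx => (hv x hx).le) v h).trans hS⟩)).2
    linarith
  push Not at hS
  by_cases h6 : m.sum ≤ 62/10
  · have a := stepA_lower m hv hb h2 m.sum hS.le hK 1 one_pos (by linarith)
    have b := bandI m hv hS.le h6
    linarith
  push Not at h6
  by_cases h17 : m.sum ≤ 17
  · have a := stepA_lower m hv hb h2 m.sum hS.le hK (48/143) (by norm_num) (by linarith)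
    have b := bandII m hv hb (by linarith) h17
    linarith
  push Not at h17
  have hp : 0 < m.sum := by linarith
  have a := stepA_lower m hv hb h2 m.sum hS.le hK (2/m.sum) (by positivity) (by
    rw [div_mul_cancel₀ _ hp.ne'])
  have b := bandIII m hv hb h17.le
  linarith

lemma comp_ppol (M y : ℝ) (R : Multiset ℝ) (hR : ∀ r ∈ R, r < M) :
    ((R.map fun r => X - Polynomial.C r).prod).comp (Polynomial.C y - Polynomial.C (M-y) * X) =
      Polynomial.C (R.map fun r => M - r).prod * ppol (R.map fun r => (M-y)/(M-r)) := by
  induction R using Multiset.induction with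
  | empty => simp [ppol_zero]
  | cons r R ih =>
    have h := ih (fun w hw => hR w (Multiset.mem_cons_of_mem hw))
    have hr : M - r ≠ 0 := by
      have := hR r (Multiset.mem_cons_self r R)
      linarith
    rw [Multiset.map_cons, Multiset.prod_cons, Polynomial.mul_comp, h, Multiset.map_cons, Multiset.prod_cons,
      Multiset.map_cons, ppol_cons, Polynomial.sub_comp, Polynomial.X_comp, Polynomial.C_comp, Polynomial.C_mul]
    have e1 : y - r = (M-r)*(1-(M-y)/(M-r)) := by field_simp; ring
    have e2 : (M-y) = (M-r)*((M-y)/(M-r)) := by field_simp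
    have e : Polynomial.C y - Polynomial.C (M-y) * X - Polynomial.C r =
       Polynomial.C (M-r) * (Polynomial.C (1-(M-y)/(M-r)) - Polynomial.C ((M-y)/(M-r)) * X) := by
      rw [mul_sub, ← mul_assoc, ← Polynomial.C_mul, ← Polynomial.C_mul, ← e1, ← e2, show Polynomial.C (y-r) = Polynomial.C y - Polynomial.C r from Polynomial.C_sub]
      ring
    rw [e]; ring

lemma ppol_eval (m : Multiset ℝ) (w : ℝ) : (ppol m).eval (w-1) = (m.map fun v => 1 - v*w).prod := by
  induction m using Multiset.induction with
  | empty => rw [ppol_zero]; simp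
  | cons v m ih => rw [ppol_cons]; simp [ih]; left; ring

/-- Claim C at an interior critical point. -/
lemma claimC_crit (p : ℝ[X]) (M y : ℝ) (hs : p.Splits) (hp : p ≠ 0) (hroots : ∀ r ∈ p.roots, r < M)
    (hy0 : 0 ≤ y) (hyM : y < M) (hb : ∀ x ∈ Icc (-M) M, |p.eval x| ≤ |p.eval M|)
    (h2 : (derivative (derivative p)).eval y = 0) :
    |(derivative p).eval y| ≤ |(derivative p).eval M| := by
  set R := p.roots with hR
  have hδ : 0 < M - y := by linarith
  have hfac := hs.eq_prod_roots
  have hcomp : p.comp (Polynomial.C y - Polynomial.C (M-y) * X) =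
      Polynomial.C (p.eval M) * ppol (R.map fun r => (M-y)/(M-r)) := by
    have hev : p.eval M = p.leadingCoeff * (R.map fun r => M - r).prod := by
      conv_lhs => rw [hfac]
      rw [Polynomial.eval_mul, Polynomial.eval_C, Polynomial.eval_multiset_prod, Multiset.map_map]
      simp
      left; rfl
    conv_lhs => rw [hfac]
    rw [Polynomial.mul_comp, comp_ppol M y R hroots, hev, Polynomial.C_comp, Polynomial.C_mul]
    ring
  have hM0 : p.eval M ≠ 0 := by
    intro h
    have : M ∈ p.roots := (Polynomial.mem_roots hp).2 h
    exact lt_irrefl _ (hroots M this)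
  set m := R.map fun r => (M-y)/(M-r) with hm
  have hv : ∀ v ∈ m, 0 < v := by
    intro v hv
    obtain ⟨r, hr, rfl⟩ := Multiset.mem_map.mp hv
    have := hroots r hr
    exact div_pos hδ (by linarith)
  have hb' : ∀ w, 0 ≤ w → w ≤ 2 → |(m.map fun v => 1 - v * w).prod| ≤ 1 := by
    intro w w0 w2
    rw [← ppol_eval]
    have h1 := congrArg (Polynomial.eval (w-1)) hcomp
    rw [Polynomial.eval_comp, Polynomial.eval_mul, Polynomial.eval_C] at h1
    have h3 := hb (y - (M-y)*(w-1)) ⟨by nlinarith, by nlinarith⟩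
    have e4 : (Polynomial.C y - Polynomial.C (M-y) * X).eval (w-1) = y - (M-y)*(w-1) := by simp
    rw [e4] at h1
    rw [h1, abs_mul] at h3
    have : 0 < |p.eval M| := abs_pos.2 hM0
    exact le_of_mul_le_mul_left (by linarith) this
  have d1 := congrArg derivative hcomp
  have d2 := congrArg derivative d1
  have dq : derivative (Polynomial.C y - Polynomial.C (M-y) * X) = Polynomial.C (-(M-y)) := by
    rw [Polynomial.derivative_sub, Polynomial.derivative_C, Polynomial.derivative_C_mul, Polynomial.derivative_X, Polynomial.C_neg]
    ring
  rw [Polynomial.derivative_comp, dq, Polynomial.derivative_C_mul] at d1 d2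
  rw [Polynomial.derivative_C_mul, Polynomial.derivative_comp, dq, Polynomial.derivative_C_mul] at d2
  have e1 := congrArg (Polynomial.eval 0) d1
  have e2 := congrArg (Polynomial.eval 0) d2
  have q0 : (Polynomial.C y - Polynomial.C (M-y) * X).eval 0 = y := by simp
  simp only [Polynomial.eval_mul, Polynomial.eval_C, Polynomial.eval_comp, q0, h2, mul_zero] at e1 e2
  rw [← Polynomial.coeff_zero_eq_eval_zero, Polynomial.coeff_derivative] at e1 e2
  rw [Polynomial.coeff_derivative] at e2
  norm_num at e1 e2
  have hc2 : (ppol m).coeff 2 = 0 := by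
    rcases e2 with h | h
    · exact absurd h hM0
    · exact h
  have hC := C0 m hv hb' hc2
  have hsum := hs.eval_derivative_div_eval_of_ne_zero hM0
  have hms : m.sum = (M-y) * ((derivative p).eval M / p.eval M) := by
    rw [hsum, hm, ← Multiset.sum_map_mul_left]
    congr 1
    apply Multiset.map_congr rfl
    intro r _
    ring
  have hpos : 0 < |p.eval M| := abs_pos.2 hM0
  have h5 : (M-y) * |(derivative p).eval y| = |p.eval M| * |(ppol m).coeff 1| := by
    rw [← abs_mul, ← e1, abs_mul]
    congr 1
    rw [abs_sub_comm, abs_of_pos hδ]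
  have h6 : |p.eval M| * m.sum ≤ (M-y) * |(derivative p).eval M| := by
    have : |p.eval M| * m.sum ≤ |p.eval M| * |m.sum| := mul_le_mul_of_nonneg_left (le_abs_self _) hpos.le
    refine this.trans (le_of_eq ?_)
    rw [hms, abs_mul, abs_div, abs_of_pos hδ]
    field_simp
  have h7 := mul_le_mul_of_nonneg_left hC hpos.le
  exact le_of_mul_le_mul_left (by linarith) hδ

def SymP (p : ℝ[X]) : Prop := ∃ e : ℝ, |e| = 1 ∧ p.comp (-X) = Polynomial.C e * p

lemma SymP.abs_eval {p : ℝ[X]} (h : SymP p) (x : ℝ) : |p.eval (-x)| = |p.eval x| := by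
  obtain ⟨e, he, h⟩ := h
  have := congrArg (Polynomial.eval x) h
  rw [Polynomial.eval_comp, Polynomial.eval_mul, Polynomial.eval_C] at this
  simp at this
  rw [this, abs_mul, he, one_mul]

lemma SymP.deriv {p : ℝ[X]} (h : SymP p) : SymP (derivative p) := by
  obtain ⟨e, he, h⟩ := h
  refine ⟨-e, by rw [abs_neg, he], ?_⟩
  have := congrArg derivative h
  rw [Polynomial.derivative_comp, Polynomial.derivative_C_mul] at this
  simp at this
  rw [Polynomial.C_neg, neg_mul, ← this, neg_neg]

lemma claimC (p : ℝ[X]) (M : ℝ) (hs : p.Splits) (hp : p ≠ 0) (hM : 0 < M) (hroots : ∀ r ∈ p.roots, r < M)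
    (hsym : SymP p) (hb : ∀ x ∈ Icc (-M) M, |p.eval x| ≤ |p.eval M|) :
    ∀ x ∈ Icc (-M) M, |(derivative p).eval x| ≤ |(derivative p).eval M| := by
  obtain ⟨x0, hx0, hmax⟩ := (isCompact_Icc (a := -M) (b := M)).exists_isMaxOn ⟨M, by constructor <;> linarith⟩
    (f := fun x => |(derivative p).eval x|) (by fun_prop)
  have hmax' : ∀ x ∈ Icc (-M) M, |(derivative p).eval x| ≤ |(derivative p).eval x0| := fun x hx => hmax hx
  set y := |x0| with hy
  have hyv : |(derivative p).eval x0| = |(derivative p).eval y| := by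
    rcases abs_choice x0 with h | h
    · rw [hy, h]
    · rw [hy, h, hsym.deriv.abs_eval]
  rw [hyv] at hmax'
  have hyM : y ≤ M := abs_le.2 hx0
  suffices |(derivative p).eval y| ≤ |(derivative p).eval M| from fun x hx => (hmax' x hx).trans this
  rcases hyM.eq_or_lt with h | h
  · rw [h]
  have hy0 : 0 ≤ y := abs_nonneg _
  have hloc : IsLocalMax (fun x => (derivative p ^ 2).eval x) y := by
    filter_upwards [Icc_mem_nhds (show -M < y by linarith) h] with x hx
    have := hmax' x hx
    simp only [Polynomial.eval_pow]
    exact sq_le_sq.2 this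
  have hd := hloc.hasDerivAt_eq_zero ((derivative p ^ 2).hasDerivAt y)
  rw [Polynomial.derivative_pow] at hd
  simp at hd
  rcases hd with hd | hd
  · rw [hd]; simp
  · exact claimC_crit p M y hs hp hroots hy0 h hb hd

structure GInv (M : ℝ) (p : ℝ[X]) : Prop where
  splits : p.Splits
  roots_lt : ∀ r ∈ p.roots, r < M
  sym : SymP p
  bound : ∀ x ∈ Icc (-M) M, |p.eval x| ≤ |p.eval M|

lemma GInv.step {M : ℝ} {p : ℝ[X]} (hM : 0 < M) (h : GInv M p) (hd : 0 < p.natDegree) :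
    GInv M (derivative p) ∧ (derivative p).natDegree = p.natDegree - 1 := by
  have hp : p ≠ 0 := by rintro rfl; simp at hd
  have c1 := Polynomial.card_roots_le_derivative p
  have c2 := Polynomial.card_roots' (derivative p)
  have c3 := Polynomial.natDegree_derivative_le p
  have c4 := Polynomial.splits_iff_card_roots.1 h.splits
  refine ⟨⟨Polynomial.splits_iff_card_roots.2 (by omega), ?_, h.sym.deriv, claimC p M h.splits hp hM h.roots_lt h.sym h.bound⟩, by omega⟩
  intro x hx
  by_contra hcon
  push Not at hcon
  have hlt : ∀ r ∈ p.roots, r < x := fun r hr => (h.roots_lt r hr).trans_le hcon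
  have hx0 : p.eval x ≠ 0 := fun h0 => lt_irrefl _ (hlt x ((Polynomial.mem_roots hp).2 h0))
  have hsum := h.splits.eval_derivative_div_eval_of_ne_zero hx0
  have hx' : (derivative p).eval x = 0 := Polynomial.isRoot_of_mem_roots hx
  rw [hx', zero_div] at hsum
  obtain ⟨r, hr⟩ := Multiset.card_pos_iff_exists_mem.1 (show 0 < p.roots.card by omega)
  have : 1/(x-r) ≤ (p.roots.map fun z => 1/(x-z)).sum := by
    refine Multiset.single_le_sum ?_ _ (Multiset.mem_map.2 ⟨r, hr, rfl⟩)
    intro a ha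
    obtain ⟨t, ht, rfl⟩ := Multiset.mem_map.mp ha
    have := hlt t ht
    exact div_nonneg zero_le_one (by linarith)
  have hr' := hlt r hr
  have : 0 < 1/(x-r) := div_pos one_pos (by linarith)
  linarith

lemma GInv.iter {M : ℝ} {p : ℝ[X]} (hM : 0 < M) (h : GInv M p) (k : ℕ) (hk : k ≤ p.natDegree) :
    GInv M (derivative^[k] p) ∧ (derivative^[k] p).natDegree = p.natDegree - k := by
  induction k with
  | zero => exact ⟨h, by simp⟩
  | succ k ih =>
    obtain ⟨h1, h2⟩ := ih (by omega)
    rw [Function.iterate_succ_apply']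
    obtain ⟨h3, h4⟩ := h1.step hM (by omega)
    exact ⟨h3, by omega⟩


lemma w_integrable (β : ℝ) (hβ : -1 < β) :
    IntegrableOn (fun x : ℝ => (1 - x^2)^β) (Ioo (-1:ℝ) 1) := by
  have h1 : IntervalIntegrable (fun x : ℝ => x^β) volume 0 2 := intervalIntegral.intervalIntegrable_rpow' hβ
  have hA : IntervalIntegrable (fun x : ℝ => (1+x)^β) volume (-1) 1 := by
    have := h1.comp_add_left 1
    norm_num at this
    exact this
  have hB : IntervalIntegrable (fun x : ℝ => (1-x)^β) volume (-1) 1 := by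
    have := (h1.comp_sub_left 1).symm
    norm_num at this
    exact this
  have hcontA : ContinuousOn (fun x : ℝ => (1+x)^β) (Icc 0 1) := by
    apply ContinuousOn.rpow_const (by fun_prop)
    intro x hx; left; have := hx.1; linarith
  have hcontB : ContinuousOn (fun x : ℝ => (1-x)^β) (Icc (-1) 0) := by
    apply ContinuousOn.rpow_const (by fun_prop)
    intro x hx; left; have := hx.2; linarith
  have i1 : IntervalIntegrable (fun x : ℝ => (1+x)^β * (1-x)^β) volume (-1) 0 := by
    apply IntervalIntegrable.mul_continuousOn
    · apply hA.mono_set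
      rw [uIcc_of_le (by norm_num), uIcc_of_le (by norm_num)]
      exact Icc_subset_Icc le_rfl (by norm_num)
    · rwa [uIcc_of_le (by norm_num)]
  have i2 : IntervalIntegrable (fun x : ℝ => (1+x)^β * (1-x)^β) volume 0 1 := by
    apply IntervalIntegrable.continuousOn_mul
    · apply hB.mono_set
      rw [uIcc_of_le (by norm_num), uIcc_of_le (by norm_num)]
      exact Icc_subset_Icc (by norm_num) le_rfl
    · rwa [uIcc_of_le (by norm_num)]
  have i3 := i1.trans i2
  rw [intervalIntegrable_iff_integrableOn_Ioo_of_le (by norm_num)] at i3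
  refine i3.congr_fun ?_ measurableSet_Ioo
  intro x hx
  simp only
  rw [← Real.mul_rpow (by linarith [hx.1]) (by linarith [hx.2])]
  congr 1; ring

lemma geg_integrable (α : ℝ) (hα : -1/2 < α) (f g : ℝ[X]) :
    IntegrableOn (fun x : ℝ => f.eval x * g.eval x * (1 - x^2)^(α-1/2)) (Ioo (-1:ℝ) 1) := by
  have h := w_integrable (α-1/2) (by linarith)
  rw [← integrableOn_Icc_iff_integrableOn_Ioo] at h ⊢
  exact h.continuousOn_mul (by fun_prop) isCompact_Icc

lemma geg_sub_left (α : ℝ) (hα : -1/2 < α) (f g h : ℝ[X]) :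
    gegInner α (f-g) h = gegInner α f h - gegInner α g h := by
  unfold gegInner
  rw [← integral_sub (geg_integrable α hα f h) (geg_integrable α hα g h)]
  congr 1; ext x; simp; ring

lemma geg_nonneg (α : ℝ) (f : ℝ[X]) : 0 ≤ gegInner α f f := by
  unfold gegInner
  apply setIntegral_nonneg measurableSet_Ioo
  intro x hx
  have : 0 ≤ 1 - x^2 := by nlinarith [hx.1, hx.2]
  exact mul_nonneg (mul_self_nonneg _) (Real.rpow_nonneg this _)

lemma geg_eq_zero (α : ℝ) (hα : -1/2 < α) (f : ℝ[X]) (h : gegInner α f f = 0) : f = 0 := by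
  by_contra hf
  have hpos : 0 < gegInner α f f := by
    unfold gegInner
    rw [setIntegral_pos_iff_support_of_nonneg_ae]
    · have hsub : Ioo (-1:ℝ) 1 \ (f.roots.toFinset : Set ℝ) ⊆
        Function.support (fun x : ℝ => f.eval x * f.eval x * (1 - x^2)^(α-1/2)) ∩ Ioo (-1:ℝ) 1 := by
        intro x hx
        refine ⟨?_, hx.1⟩
        have h0 : f.eval x ≠ 0 := by
          intro h0; apply hx.2; simp [hf, h0]
        have : 0 < 1 - x^2 := by nlinarith [hx.1.1, hx.1.2]
        exact mul_ne_zero (mul_ne_zero h0 h0) (Real.rpow_pos_of_pos this _).ne'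
      refine lt_of_lt_of_le ?_ (measure_mono hsub)
      rw [measure_sdiff_null (Finset.measure_zero _ _)]
      simp
    · filter_upwards [ae_restrict_mem measurableSet_Ioo] with x hx
      have : 0 ≤ 1 - x^2 := by nlinarith [hx.1, hx.2]
      exact mul_nonneg (mul_self_nonneg _) (Real.rpow_nonneg this _)
    · exact geg_integrable α hα f f
  exact hpos.ne' h

lemma geg_comp (α : ℝ) (f g : ℝ[X]) :
    gegInner α (f.comp (-X)) g = gegInner α f (g.comp (-X)) := by
  unfold gegInner
  rw [← integral_Ioc_eq_integral_Ioo, ← integral_Ioc_eq_integral_Ioo,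
    ← intervalIntegral.integral_of_le (by norm_num), ← intervalIntegral.integral_of_le (by norm_num)]
  have := intervalIntegral.integral_comp_neg (a := -1) (b := 1) (fun x : ℝ => f.eval x * (g.comp (-X)).eval x * (1 - x^2)^(α-1/2))
  rw [neg_neg] at this
  rw [← this]
  congr 1; ext x; simp

lemma polyDeriv_comp_neg (f : ℝ[X]) : derivative (f.comp (-X)) = - (derivative f).comp (-X) := by
  rw [derivative_comp]; simp

lemma geg_neg_left (α : ℝ) (f g : ℝ[X]) : gegInner α (-f) g = - gegInner α f g := by
  unfold gegInner
  rw [← integral_neg]; congr 1; ext x; simp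

lemma geg_neg_right (α : ℝ) (f g : ℝ[X]) : gegInner α f (-g) = - gegInner α f g := by
  unfold gegInner
  rw [← integral_neg]; congr 1; ext x; simp

lemma geg_C_left (α c : ℝ) (f g : ℝ[X]) : gegInner α (Polynomial.C c * f) g = c * gegInner α f g := by
  unfold gegInner
  rw [← integral_const_mul]; congr 1; ext x; simp; ring

lemma sob_comp (α lam : ℝ) (f g : ℝ[X]) :
    sobInner α lam (f.comp (-X)) g = sobInner α lam f (g.comp (-X)) := by
  unfold sobInner
  rw [geg_comp, polyDeriv_comp_neg, polyDeriv_comp_neg, geg_neg_left, geg_neg_right, geg_comp]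

lemma sob_sub_left (α lam : ℝ) (hα : -1/2 < α) (f g h : ℝ[X]) :
    sobInner α lam (f-g) h = sobInner α lam f h - sobInner α lam g h := by
  unfold sobInner
  rw [derivative_sub, geg_sub_left α hα, geg_sub_left α hα]; ring

lemma sob_C_left (α lam c : ℝ) (f g : ℝ[X]) :
    sobInner α lam (Polynomial.C c * f) g = c * sobInner α lam f g := by
  unfold sobInner
  rw [derivative_C_mul, geg_C_left, geg_C_left]; ring

lemma sob_symm {α lam : ℝ} (hα : -1/2 < α) (hlam : 0 ≤ lam) {n : ℕ} {Q : ℝ[X]}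
    (hQ : IsMonicGegSobolev α lam n Q) : SymP Q := by
  obtain ⟨hm, hd, ho⟩ := hQ
  set c : ℝ := (-1)^n with hc
  have hcc : c * c = 1 := by rw [hc, ← mul_pow]; simp
  have hcne : c ≠ 0 := by intro h; rw [h] at hcc; simp at hcc
  set T := Polynomial.C c * Q.comp (-X) with hT
  have hnd : (-X : ℝ[X]).natDegree = 1 := by simp
  have hTd : T.natDegree = n := by
    rw [hT, natDegree_C_mul hcne, natDegree_comp, hnd, hd, mul_one]
  have hTm : T.Monic := by
    unfold Polynomial.Monic
    rw [hT, leadingCoeff_mul, leadingCoeff_C, leadingCoeff_comp (by rw [hnd]; norm_num), hm.leadingCoeff, hd]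
    simp [hc, ← mul_pow]
  have hdeg : (Q - T).degree < (n:ℕ) := by
    have h1 : Q.degree = n := by rw [degree_eq_natDegree hm.ne_zero, hd]
    have h2 : T.degree = n := by rw [degree_eq_natDegree hTm.ne_zero, hTd]
    have := degree_sub_lt_left (h1.trans h2.symm) hm.ne_zero (by rw [hm.leadingCoeff, hTm.leadingCoeff])
    rwa [h1] at this
  have hdegc : ((Q-T).comp (-X)).degree < (n:ℕ) := by
    by_cases h0 : Q - T = 0
    · rw [h0]; simp
    · have : (Q-T).comp (-X) ≠ 0 := by
        intro h
        have h2 : ((Q-T).comp (-X)).comp (-X) = 0 := by rw [h]; simp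
        rw [comp_assoc] at h2
        simp at h2
        exact h0 h2
      rw [degree_eq_natDegree this, natDegree_comp, hnd, mul_one, ← degree_eq_natDegree h0]
      exact hdeg
  have hz : sobInner α lam (Q-T) (Q-T) = 0 := by
    rw [sob_sub_left α lam hα, ho _ hdeg]
    conv_lhs => rw [show sobInner α lam T (Q-T) = c * sobInner α lam (Q.comp (-X)) (Q-T) from sob_C_left _ _ _ _ _]
    rw [sob_comp, ho _ hdegc]; simp
  have h1 := geg_nonneg α (Q-T)
  have h2 := mul_nonneg hlam (geg_nonneg α (derivative (Q-T)))
  have h3 : gegInner α (Q-T) (Q-T) = 0 := by unfold sobInner at hz; linarith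
  have h4 := sub_eq_zero.mp (geg_eq_zero α hα _ h3)
  refine ⟨c, ?_, ?_⟩
  · rw [hc, abs_pow]; simp
  · conv_rhs => rw [h4, hT]
    rw [← mul_assoc, ← Polynomial.C_mul, hcc]; simp

lemma base_inv (n : ℕ) (Q : ℝ[X]) (hs : SymP Q)
    (r : Fin n → ℝ) (a b : Fin n) (hfirst : ∀ i, r a ≤ r i) (hlast : ∀ i, r i ≤ r b)
    (hfact : Q = ∏ i, (X - Polynomial.C (r i)))
    (N : ℝ)
    (hN : IsGreatest
      ((fun x => |Q.eval x|) ''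
        Set.Icc (r a) (r b)) N)
    (M : ℝ)
    (hM : IsLeast {t : ℝ | r b < t ∧ |Q.eval t| = N} M) :
    0 < M ∧ GInv M Q := by
  have hev : ∀ x, Q.eval x = ∏ i, (x - r i) := by
    intro x; rw [hfact, eval_prod]; simp
  have hsym : ∀ x, |Q.eval (-x)| = |Q.eval x| := by
    obtain ⟨e, he, h⟩ := hs
    intro x
    have := congrArg (fun p => |p.eval x|) h
    simpa [eval_comp, abs_mul, he] using this
  have hroot : ∀ x, Q.eval x = 0 → ∃ i, x = r i := by
    intro x hx
    rw [hev, Finset.prod_eq_zero_iff] at hx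
    obtain ⟨i, _, hi⟩ := hx
    exact ⟨i, sub_eq_zero.mp hi⟩
  have hrz : ∀ i, Q.eval (r i) = 0 := by
    intro i; rw [hev]; exact Finset.prod_eq_zero (Finset.mem_univ i) (sub_self _)
  have hb0 : 0 ≤ r b := by
    have h := hsym (r a)
    rw [hrz, abs_zero, abs_eq_zero] at h
    obtain ⟨i, hi⟩ := hroot _ h
    have := hlast i
    have := hlast a
    linarith
  have ha0 : r a ≤ 0 := by
    have h := hsym (r b)
    rw [hrz, abs_zero, abs_eq_zero] at h
    obtain ⟨i, hi⟩ := hroot _ h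
    have := hfirst i
    linarith
  have hM1 := hM.1.1
  have hM2 := hM.1.2
  have hMpos : 0 < M := lt_of_le_of_lt hb0 hM1
  have hQ0 : Q ≠ 0 := by
    rw [hfact]; exact (monic_prod_of_monic _ _ fun i _ => monic_X_sub_C _).ne_zero
  have key : ∀ x, 0 ≤ x → x ≤ M → |Q.eval x| ≤ |Q.eval M| := by
    intro x h0 hx
    rcases le_total x (r b) with h | h
    · rw [hM2]
      exact hN.2 ⟨x, ⟨ha0.trans h0, h⟩, rfl⟩
    · rw [hev, hev, Finset.abs_prod, Finset.abs_prod]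
      apply Finset.prod_le_prod
      · intro i _; exact abs_nonneg _
      · intro i _
        have := hlast i
        rw [abs_of_nonneg (by linarith), abs_of_nonneg (by linarith)]; linarith
  refine ⟨hMpos, ?_, ?_, hs, ?_⟩
  · rw [hfact]
    exact Splits.prod fun i _ => Splits.X_sub_C _
  · intro x hx
    obtain ⟨i, hi⟩ := hroot x ((mem_roots hQ0).mp hx)
    rw [hi]; exact lt_of_le_of_lt (hlast i) hM1
  · intro x hx
    rcases le_total 0 x with h | h
    · exact key x h hx.2
    · rw [← hsym x]; exact key (-x) (by linarith) (by linarith [hx.1])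


/-- Maximization of local extrema of the derivatives of Gegenbauer–Sobolev
polynomials: each `|d^k/dx^k Q_{n,λ}^{(α)}|` attains its maximum over
`[-M_{n,λ}, M_{n,λ}]` at the end-points. Here `r` enumerates the zeros of `Q`
in increasing order, `N` is the maximum of `|Q|` over `[x_1, x_n]`, and
`M` is the least `t > x_n` with `|Q(t)| = N`. -/
theorem gegSobolev_derivative_max_at_endpoints (α lam : ℝ) (hα : -1/2 < α)
    (hlam : 0 ≤ lam) (n : ℕ) (hn : 3 ≤ n)
    (Q : Polynomial ℝ) (hQ : IsMonicGegSobolev α lam n Q)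
    (r : Fin n → ℝ) (hr : StrictMono r)
    (hfact : Q = ∏ i, (X - Polynomial.C (r i)))
    (N : ℝ)
    (hN : IsGreatest
      ((fun x => |Q.eval x|) ''
        Set.Icc (r ⟨0, by omega⟩) (r ⟨n - 1, by omega⟩)) N)
    (M : ℝ)
    (hM : IsLeast {t : ℝ | r ⟨n - 1, by omega⟩ < t ∧ |Q.eval t| = N} M) :
    ∀ k : ℕ, 1 ≤ k → k ≤ n →
      ∀ x ∈ Set.Icc (-M) M,
        |(derivative^[k] Q).eval x| ≤ |(derivative^[k] Q).eval M| := by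
  intro k _ hk x hx
  have hs := sob_symm hα hlam hQ
  obtain ⟨hMpos, hI⟩ := base_inv n Q hs r ⟨0, by omega⟩ ⟨n - 1, by omega⟩
    (fun i => hr.monotone (by rw [Fin.le_def]; simp))
    (fun i => hr.monotone (by rw [Fin.le_def]; have := i.2; simp; omega)) hfact N hN M hM
  exact (hI.iter hMpos k (by rw [hQ.2.1]; exact hk)).1.bound x hx
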